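/- Let p ∈ (1, ∞). Let Φ be a Φ-function such that Φ ∈ (aInc)_p with constant a_Φ(p) and Φ ∈ (Dec)_q for some q ∈ [1, ∞). Then there exists a constant C depending only on p and Φ such that for every N ≥ 1, H ≥ 1, every N-dimensional subspace X_N ⊂ C(Ω) with X_N ∈ NI_{2,∞}(H), every ε ∈ (0, 1/2], and every natural number m ≥ C·ε^{-2}·(log ε^{-1})^{min{p,2}/2}·Φ(H^{2/min{p,2}})·(log 2N)²·log 2H², there is a set x = {x₁, …, x_m} ⊂ Ω of cardinality m such that a_Φ(1)^{-1}(1−ε)‖f‖_Φ ≤ ‖f‖_{Φ,x} ≤ a_Φ(1)(1+ε)‖f‖_Φ for all f ∈ X_N. -/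

import Mathlib

open MeasureTheory

noncomputable section

/-- The sup-norm (uniform norm) `‖f‖_∞ = sup_{x ∈ Ω} |f x|` of a real-valued function. -/
def supNorm {Ω : Type*} (f : Ω → ℝ) : ℝ := ⨆ x, |f x|

/-- The Luxemburg functional `‖f‖_Φ = inf {λ > 0 : ∫ Φ(|f|/λ) dμ ≤ 1}`. -/
def luxNorm {Ω : Type*} [MeasurableSpace Ω] (μ : Measure Ω) (Φ : ℝ → ℝ) (f : Ω → ℝ) : ℝ :=
  sInf {lam : ℝ | 0 < lam ∧ ∫ x, Φ (|f x| / lam) ∂μ ≤ 1}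

/-- The discrete Luxemburg functional `‖f‖_{Φ,x}` with respect to the uniform discrete
probability measure `(1/m) ∑_{j=1}^m δ_{x_j}`. -/
def discLuxNorm {Ω : Type*} (Φ : ℝ → ℝ) {m : ℕ} (x : Fin m → Ω) (f : Ω → ℝ) : ℝ :=
  sInf {lam : ℝ | 0 < lam ∧ (∑ j, Φ (|f (x j)| / lam)) / (m : ℝ) ≤ 1}

/-- The weighted discrete Luxemburg functional `‖f‖_{Φ,x,λ}` with respect to the discrete
probability measure `∑_{j=1}^m λ_j δ_{x_j}`. -/
def wDiscLuxNorm {Ω : Type*} (Φ : ℝ → ℝ) {m : ℕ} (x : Fin m → Ω) (w : Fin m → ℝ)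
    (f : Ω → ℝ) : ℝ :=
  sInf {lam : ℝ | 0 < lam ∧ (∑ j, w j * Φ (|f (x j)| / lam)) ≤ 1}

/-- `Φ : [0,∞) → [0,∞)` is a Φ-prefunction: increasing, `Φ(0) = 0`, `Φ(0+) = 0`,
`Φ(∞) = ∞` (stated for a function on `ℝ`, with the relevant conditions on `[0,∞)`). -/
structure IsPhiPrefun (Φ : ℝ → ℝ) : Prop where
  mono : MonotoneOn Φ (Set.Ici 0)
  map_zero : Φ 0 = 0
  nonneg : ∀ t : ℝ, 0 ≤ t → 0 ≤ Φ t
  tendsto_zero : Filter.Tendsto Φ (nhdsWithin 0 (Set.Ioi 0)) (nhds 0)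
  tendsto_atTop : Filter.Tendsto Φ Filter.atTop Filter.atTop

/-- `Φ ∈ (aInc)_p` with constant `a`: `t ↦ Φ(t) t^{-p}` is almost increasing on `(0,∞)`. -/
def AIncP (Φ : ℝ → ℝ) (p a : ℝ) : Prop :=
  ∀ s t : ℝ, 0 < s → s < t → Φ s / s ^ p ≤ a * (Φ t / t ^ p)

/-- `Φ ∈ (Inc)_p` : `t ↦ Φ(t) t^{-p}` is increasing on `(0,∞)`. -/
def IncP (Φ : ℝ → ℝ) (p : ℝ) : Prop :=
  ∀ s t : ℝ, 0 < s → s < t → Φ s / s ^ p ≤ Φ t / t ^ p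

/-- `Φ ∈ (Dec)_q` : `t ↦ Φ(t) t^{-q}` is decreasing on `(0,∞)`. -/
def DecQ (Φ : ℝ → ℝ) (q : ℝ) : Prop :=
  ∀ s t : ℝ, 0 < s → s < t → Φ t / t ^ q ≤ Φ s / s ^ q

/-- `Φ ∈ (aDec)_q` with constant `b`: `t ↦ Φ(t) t^{-q}` is almost decreasing on `(0,∞)`. -/
def ADecQ (Φ : ℝ → ℝ) (q b : ℝ) : Prop :=
  ∀ s t : ℝ, 0 < s → s < t → Φ t / t ^ q ≤ b * (Φ s / s ^ q)

/-- `t ↦ Φ(t) t^{-p}` is almost increasing with constant `a` on `(t_*, ∞)`. -/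
def AIncPOn (Φ : ℝ → ℝ) (p a tstar : ℝ) : Prop :=
  ∀ s t : ℝ, tstar < s → s < t → Φ s / s ^ p ≤ a * (Φ t / t ^ p)

/-- `t ↦ Φ(t) t^{-q}` is almost decreasing with constant `b` on `(t_*, ∞)`. -/
def ADecQOn (Φ : ℝ → ℝ) (q b tstar : ℝ) : Prop :=
  ∀ s t : ℝ, tstar < s → s < t → Φ t / t ^ q ≤ b * (Φ s / s ^ q)

/-- Entropy numbers `e_n(F, d)` of a set `F` with respect to a distance-like function `dd`:
the infimum of `ε > 0` such that `F` can be covered by `2^{2^n}` (one, for `n = 0`)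
`ε`-balls centered in `F`. -/
def entropyNumD {X : Type*} (dd : X → X → ℝ) (F : Set X) (n : ℕ) : ℝ :=
  sInf {ε : ℝ | 0 < ε ∧ ∃ T : Finset X, ↑T ⊆ F ∧
    T.card ≤ (if n = 0 then 1 else 2 ^ 2 ^ n) ∧ ∀ f ∈ F, ∃ g ∈ T, dd f g < ε}

/-- Sampling numbers `ϱ_m(F, ‖·‖)`: recovery by linear methods from samples at `m` points. -/
def sampNum {Ω : Type*} (nrm : (Ω → ℝ) → ℝ) (F : Set (Ω → ℝ)) (m : ℕ) : ℝ :=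
  sInf {r : ℝ | ∃ (x : Fin m → Ω) (T : (Fin m → ℝ) →ₗ[ℝ] (Ω → ℝ)),
    r = ⨆ f ∈ F, nrm (fun y => f y - T (fun j => f (x j)) y)}

/-- Modified sampling numbers `ϱ*_m(F, ‖·‖)`: recovery by arbitrary methods mapping into a
subspace of dimension at most `m`, from samples at `m` points. -/
def sampNumStar {Ω : Type*} (nrm : (Ω → ℝ) → ℝ) (F : Set (Ω → ℝ)) (m : ℕ) : ℝ :=
  sInf {r : ℝ | ∃ (x : Fin m → Ω) (Y : Submodule ℝ (Ω → ℝ)), Module.finrank ℝ Y ≤ m ∧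
    ∃ T : (Fin m → ℝ) → Ω → ℝ, (∀ v, T v ∈ Y) ∧
    r = ⨆ f ∈ F, nrm (fun y => f y - T (fun j => f (x j)) y)}

/-- Kolmogorov width `d_N(F, ‖·‖_∞)` : infimum over `N`-dimensional subspaces of `C(Ω)` of the
worst-case best approximation error in the uniform norm. -/
def kolWidth {Ω : Type*} [TopologicalSpace Ω] (F : Set (Ω → ℝ)) (N : ℕ) : ℝ :=
  sInf {r : ℝ | ∃ X : Submodule ℝ (Ω → ℝ), Module.finrank ℝ X = N ∧
    (∀ u ∈ X, Continuous u) ∧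
    r = ⨆ f ∈ F, sInf ((fun u => supNorm (fun y => f y - u y)) '' (X : Set (Ω → ℝ)))}

end


noncomputable section

/-! ### Rademacher averages -/

def rsgn (b : Bool) : ℝ := if b then 1 else -1

def rdot {m : ℕ} (e : Fin m → Bool) (v : Fin m → ℝ) : ℝ := ∑ j, rsgn (e j) * v j

def ravg {m : ℕ} (g : (Fin m → Bool) → ℝ) : ℝ := (∑ e, g e) / 2 ^ m

lemma ravg_mono {m : ℕ} {g h : (Fin m → Bool) → ℝ} (H : ∀ e, g e ≤ h e) : ravg g ≤ ravg h := by
  unfold ravg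
  gcongr with e
  exact H e

lemma ravg_add {m : ℕ} (g h : (Fin m → Bool) → ℝ) :
    ravg (fun e => g e + h e) = ravg g + ravg h := by
  unfold ravg
  rw [Finset.sum_add_distrib, add_div]

lemma ravg_mul {m : ℕ} (c : ℝ) (g : (Fin m → Bool) → ℝ) :
    ravg (fun e => c * g e) = c * ravg g := by
  unfold ravg
  rw [← Finset.mul_sum, mul_div_assoc]

lemma ravg_const {m : ℕ} (c : ℝ) : ravg (fun _ : Fin m → Bool => c) = c := by
  unfold ravg
  simp [Finset.card_univ]

lemma ravg_sum {m : ℕ} {ι : Type*} (T : Finset ι) (g : ι → (Fin m → Bool) → ℝ) :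
    ravg (fun e => ∑ i ∈ T, g i e) = ∑ i ∈ T, ravg (g i) := by
  unfold ravg
  rw [Finset.sum_comm, Finset.sum_div]

lemma ravg_exp {m : ℕ} (v : Fin m → ℝ) (l : ℝ) :
    ravg (fun e => Real.exp (l * rdot e v)) ≤ Real.exp (l ^ 2 * (∑ j, v j ^ 2) / 2) := by
  unfold ravg rdot
  have h1 : ∀ e : Fin m → Bool, Real.exp (l * ∑ j, rsgn (e j) * v j)
      = ∏ j, Real.exp (l * (rsgn (e j) * v j)) := by
    intro e
    rw [Finset.mul_sum, Real.exp_sum]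
  simp_rw [h1]
  have h2 := (Finset.prod_univ_sum (fun _ : Fin m => (Finset.univ : Finset Bool))
    (fun j b => Real.exp (l * (rsgn b * v j))))
  rw [Fintype.piFinset_univ] at h2
  rw [← h2]
  have h3 : ∀ j : Fin m, ∑ b : Bool, Real.exp (l * (rsgn b * v j)) = 2 * Real.cosh (l * v j) := by
    intro j
    simp [rsgn, Real.cosh_eq]
    ring
  simp_rw [h3]
  rw [Finset.prod_mul_distrib]
  simp only [Finset.prod_const, Finset.card_univ, Fintype.card_fin]
  rw [mul_div_assoc, mul_div_cancel₀]
  · have : Real.exp (l ^ 2 * (∑ j, v j ^ 2) / 2) = ∏ j, Real.exp ((l * v j) ^ 2 / 2) := by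
      rw [← Real.exp_sum]
      congr 1
      rw [Finset.mul_sum, Finset.sum_div]
      refine Finset.sum_congr rfl fun j _ => by ring
    rw [this]
    refine Finset.prod_le_prod (fun j _ => (Real.cosh_pos _).le) fun j _ => Real.cosh_le_exp_half_sq _
  · positivity

lemma rdot_neg {m : ℕ} (e : Fin m → Bool) (v : Fin m → ℝ) : rdot e (fun j => - v j) = - rdot e v := by
  simp [rdot]

lemma rdot_sub {m : ℕ} (e : Fin m → Bool) (v w : Fin m → ℝ) :
    rdot e (fun j => v j - w j) = rdot e v - rdot e w := by
  simp [rdot, mul_sub]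

lemma abs_rdot_le {m : ℕ} (e : Fin m → Bool) (v : Fin m → ℝ) : |rdot e v| ≤ ∑ j, |v j| := by
  unfold rdot
  refine (Finset.abs_sum_le_sum_abs _ _).trans (Finset.sum_le_sum fun j _ => ?_)
  rw [abs_mul]
  have : |rsgn (e j)| = 1 := by unfold rsgn; split_ifs <;> simp
  rw [this, one_mul]

lemma rad_max {m : ℕ} {ι : Type*} (T : Finset ι) (hT : T.Nonempty) (v : ι → Fin m → ℝ)
    (s l : ℝ) (hs : 0 < s) (hl : 0 < l) (hv : ∀ i ∈ T, ∑ j, v i j ^ 2 ≤ s ^ 2)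
    (hc : 2 * (T.card : ℝ) ≤ Real.exp l) :
    ravg (fun e => T.sup' hT (fun i => |rdot e (v i)|)) ≤ s * Real.sqrt (2 * l) := by
  set lam := Real.sqrt (2 * l) / s with hlam
  have hlam0 : 0 < lam := by positivity
  have hls : lam ^ 2 * s ^ 2 = 2 * l := by
    rw [hlam, div_pow, Real.sq_sqrt (by positivity)]
    field_simp
  have key : ∀ e : Fin m → Bool, lam * T.sup' hT (fun i => |rdot e (v i)|) ≤
      (2 * l - 1) + Real.exp (-(2 * l)) * ∑ i ∈ T, (Real.exp (lam * rdot e (v i)) +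
        Real.exp (lam * rdot e (fun j => - v i j))) := by
    intro e
    obtain ⟨i, hi, hmax⟩ := Finset.exists_mem_eq_sup' hT (fun i => |rdot e (v i)|)
    rw [hmax]
    have h1 := Real.add_one_le_exp (lam * |rdot e (v i)| - 2 * l)
    have h2 : Real.exp (lam * |rdot e (v i)|) ≤ ∑ i ∈ T, (Real.exp (lam * rdot e (v i)) +
        Real.exp (lam * rdot e (fun j => - v i j))) := by
      refine le_trans ?_ (Finset.single_le_sum (f := fun i => Real.exp (lam * rdot e (v i)) +
        Real.exp (lam * rdot e (fun j => - v i j))) (fun i _ => by positivity) hi)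
      simp only [rdot_neg]
      rcases abs_cases (rdot e (v i)) with h | h
      · rw [h.1]
        have := Real.exp_pos (lam * -rdot e (v i))
        linarith
      · rw [h.1]
        have := Real.exp_pos (lam * rdot e (v i))
        linarith
    have h3 : Real.exp (lam * |rdot e (v i)| - 2 * l)
      = Real.exp (-(2 * l)) * Real.exp (lam * |rdot e (v i)|) := by
      rw [← Real.exp_add]; congr 1; ring
    have h4 := mul_le_mul_of_nonneg_left h2 (Real.exp_pos (-(2 * l))).le
    linarith
  have h5 := ravg_mono key
  rw [ravg_mul, ravg_add, ravg_const, ravg_mul, ravg_sum] at h5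
  have h6 : ∑ i ∈ T, ravg (fun e => Real.exp (lam * rdot e (v i)) +
        Real.exp (lam * rdot e (fun j => - v i j))) ≤ ∑ i ∈ T, 2 * Real.exp l := by
    refine Finset.sum_le_sum fun i hi => ?_
    rw [ravg_add]
    have h7 := ravg_exp (v i) lam
    have h8 := ravg_exp (fun j => - v i j) lam
    simp only [neg_sq] at h8
    have h9 : Real.exp (lam ^ 2 * (∑ j, v i j ^ 2) / 2) ≤ Real.exp l := by
      apply Real.exp_le_exp.mpr
      have := mul_le_mul_of_nonneg_left (hv i hi) (sq_nonneg lam)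
      linarith
    linarith
  have h7 : Real.exp (-(2 * l)) * ∑ i ∈ T, 2 * Real.exp l ≤ 1 := by
    rw [Finset.sum_const, nsmul_eq_mul]
    have : Real.exp (-(2 * l)) * (Real.exp l * Real.exp l) = 1 := by
      rw [← Real.exp_add, ← Real.exp_add]; simp; ring
    have h8 := mul_le_mul_of_nonneg_right hc (Real.exp_pos l).le
    have h9 := mul_le_mul_of_nonneg_left h8 (Real.exp_pos (-(2 * l))).le
    linarith
  have h8 := mul_le_mul_of_nonneg_left h6 (Real.exp_pos (-(2 * l))).le
  have h9 : lam * ravg (fun e => T.sup' hT (fun i => |rdot e (v i)|)) ≤ 2 * l := by linarith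
  have h10 : lam * (s * Real.sqrt (2 * l)) = 2 * l := by
    rw [hlam]
    have := Real.mul_self_sqrt (show 0 ≤ 2 * l by positivity)
    field_simp
    linarith
  exact le_of_mul_le_mul_left (by linarith) hlam0

/-! ### Nets and chaining -/

lemma exists_sep_net {E : Type*} [AddCommGroup E] [Module ℝ E] (ρ : Seminorm ℝ E)
    (F : Finset E) (t : ℝ) (ht : 0 ≤ t) :
    ∃ S ⊆ F, (∀ a ∈ S, ∀ b ∈ S, a ≠ b → t < ρ (a - b)) ∧ ∀ f ∈ F, ∃ s ∈ S, ρ (f - s) ≤ t := by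
  classical
  obtain ⟨S, hS, hmax⟩ := Finset.exists_max_image
    (F.powerset.filter (fun S => ∀ a ∈ S, ∀ b ∈ S, a ≠ b → t < ρ (a - b))) Finset.card
    ⟨∅, by simp⟩
  simp only [Finset.mem_filter, Finset.mem_powerset] at hS hmax
  refine ⟨S, hS.1, hS.2, fun f hf => ?_⟩
  by_contra hcon
  push Not at hcon
  have hfS : f ∉ S := fun h => by
    have := hcon f h
    simp at this
    linarith
  have := hmax (insert f S) ⟨Finset.insert_subset hf hS.1, by
    intro a ha b hb hab
    rcases Finset.mem_insert.mp ha with rfl | ha' <;> rcases Finset.mem_insert.mp hb with rfl | hb'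
    · exact absurd rfl hab
    · exact hcon b hb'
    · rw [map_sub_rev]; exact hcon a ha'
    · exact hS.2 a ha' b hb' hab⟩
  rw [Finset.card_insert_of_notMem hfS] at this
  omega

lemma net_step {E : Type*} [AddCommGroup E] [Module ℝ E] [DecidableEq E] (ρ : Seminorm ℝ E)
    (F : Finset E) (t t' a : ℝ) (ht' : 0 ≤ t')
    (hent : ∀ g ∈ F, ∀ S ⊆ F, (∀ f ∈ S, ρ (f - g) ≤ t) →
      (∀ f ∈ S, ∀ f' ∈ S, f ≠ f' → t' < ρ (f - f')) → (S.card : ℝ) ≤ Real.exp a)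
    (π : E → E) (hπ : ∀ f ∈ F, π f ∈ F) (hπt : ∀ f ∈ F, ρ (f - π f) ≤ t) :
    ∃ π' : E → E, (∀ f ∈ F, π' f ∈ F) ∧ (∀ f ∈ F, ρ (f - π' f) ≤ t') ∧
      ((F.image (fun f => (π' f, π f))).card : ℝ) ≤ (F.image π).card * Real.exp a := by
  choose S hSF hSsep hSnet using fun g => exists_sep_net ρ (F.filter (fun f => π f = g)) t' ht'
  have hcell : ∀ f ∈ F, f ∈ F.filter (fun f' => π f' = π f) := fun f hf => by simp [hf]
  choose! π' hπ'S hπ'ρ using fun f (hf : f ∈ F) => hSnet (π f) f (hcell f hf)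
  refine ⟨π', fun f hf => ?_, hπ'ρ, ?_⟩
  · exact (Finset.mem_filter.mp (hSF _ (hπ'S f hf))).1
  · have hsub : F.image (fun f => (π' f, π f)) ⊆
        (F.image π).biUnion (fun g => (S g).image (fun s => (s, g))) := by
      intro x hx
      obtain ⟨f, hf, rfl⟩ := Finset.mem_image.mp hx
      refine Finset.mem_biUnion.mpr ⟨π f, Finset.mem_image_of_mem _ hf, ?_⟩
      exact Finset.mem_image.mpr ⟨π' f, hπ'S f hf, rfl⟩
    have h1 : ((F.image (fun f => (π' f, π f))).card : ℝ) ≤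
        ∑ g ∈ F.image π, (((S g).image (fun s => (s, g))).card : ℝ) := by
      exact_mod_cast (Finset.card_le_card hsub).trans Finset.card_biUnion_le
    refine h1.trans ?_
    have h2 : ∀ g ∈ F.image π, (((S g).image (fun s => (s, g))).card : ℝ) ≤ Real.exp a := by
      intro g hg
      obtain ⟨f0, hf0, rfl⟩ := Finset.mem_image.mp hg
      refine le_trans (by exact_mod_cast Finset.card_image_le) (hent (π f0) (hπ f0 hf0) (S (π f0))
        ((hSF _).trans (Finset.filter_subset _ _)) ?_ (hSsep _))
      intro f hf
      have := Finset.mem_filter.mp (hSF _ hf)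
      rw [← this.2]
      exact hπt f this.1
    refine (Finset.sum_le_sum h2).trans ?_
    rw [Finset.sum_const, nsmul_eq_mul]

lemma chain_aux {E : Type*} [AddCommGroup E] [Module ℝ E] (ρ : Seminorm ℝ E)
    {m : ℕ} (F : Finset E) (hF : F.Nonempty) (h0 : (0 : E) ∈ F) (φ : E → Fin m → ℝ) (hφ0 : φ 0 = 0)
    (t a D : ℕ → ℝ) (ht : ∀ k, 0 < t k) (htd : ∀ k, t (k + 1) ≤ t k) (ha : ∀ k, 0 ≤ a k)
    (hD : ∀ k, 0 < D k)
    (hstart : ∀ f ∈ F, ρ f ≤ t 0)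
    (hent : ∀ k, ∀ g ∈ F, ∀ S ⊆ F, (∀ f ∈ S, ρ (f - g) ≤ t k) →
      (∀ f ∈ S, ∀ f' ∈ S, f ≠ f' → t (k + 1) < ρ (f - f')) → (S.card : ℝ) ≤ Real.exp (a k))
    (hd : ∀ k, ∀ f ∈ F, ∀ g ∈ F, ρ (f - g) ≤ 2 * t k → ∑ j, (φ f j - φ g j) ^ 2 ≤ D k ^ 2)
    (n : ℕ) :
    ∃ π : E → E, (∀ f ∈ F, π f ∈ F) ∧ (∀ f ∈ F, ρ (f - π f) ≤ t n) ∧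
      (∃ (_ : DecidableEq E), ((F.image π).card : ℝ) ≤ Real.exp (∑ i ∈ Finset.range n, a i)) ∧
      ravg (fun e => F.sup' hF (fun f => |rdot e (φ (π f))|)) ≤
        ∑ k ∈ Finset.range n, D k * Real.sqrt (2 * (1 + ∑ i ∈ Finset.range (k + 1), a i)) := by
  classical
  induction n with
  | zero =>
    refine ⟨fun _ => 0, fun _ _ => h0, fun f hf => by simpa using hstart f hf,
      ⟨inferInstance, ?_⟩, ?_⟩
    · simp [Finset.image_const hF]
    · have : ravg (fun e => F.sup' hF (fun f => |rdot e (φ 0)|)) = 0 := by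
        simp [hφ0, rdot, Finset.sup'_const, ravg]
      refine this.le.trans ?_
      simp
  | succ n ih =>
    obtain ⟨π, hπ, hπt, ⟨dE, hcard⟩, havg⟩ := ih
    obtain ⟨π', hπ', hπ't, hcard'⟩ := net_step ρ F (t n) (t (n + 1)) (a n) (ht _).le (hent n) π hπ hπt
    have hc1 : ((F.image (fun f => (π' f, π f))).card : ℝ) ≤
        Real.exp (∑ i ∈ Finset.range (n + 1), a i) := by
      rw [Finset.sum_range_succ, Real.exp_add]
      refine hcard'.trans ?_
      gcongr
    refine ⟨π', hπ', hπ't, ⟨inferInstance, ?_⟩, ?_⟩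
    · refine le_trans ?_ hc1
      have : F.image π' = (F.image (fun f => (π' f, π f))).image Prod.fst := by
        rw [Finset.image_image]; rfl
      rw [this]
      exact_mod_cast Finset.card_image_le
    · have hne : (F.image (fun f => (π' f, π f))).Nonempty := hF.image _
      have hpt : ∀ e : Fin m → Bool, F.sup' hF (fun f => |rdot e (φ (π' f))|) ≤
          F.sup' hF (fun f => |rdot e (φ (π f))|) +
          (F.image (fun f => (π' f, π f))).sup' hne
            (fun x => |rdot e (fun j => φ x.1 j - φ x.2 j)|) := by
        intro e
        refine Finset.sup'_le _ _ fun f hf => ?_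
        have h1 := Finset.le_sup' (fun f => |rdot e (φ (π f))|) hf
        have h2 := Finset.le_sup' (fun x : E × E => |rdot e (fun j => φ x.1 j - φ x.2 j)|)
          (Finset.mem_image_of_mem (fun f => (π' f, π f)) hf)
        simp only [rdot_sub] at h2 ⊢
        have h3 := abs_add_le (rdot e (φ (π f))) (rdot e (φ (π' f)) - rdot e (φ (π f)))
        rw [add_sub_cancel] at h3
        linarith
      have h4 := ravg_mono hpt
      rw [ravg_add] at h4
      rw [Finset.sum_range_succ]
      have hsn : 0 ≤ ∑ i ∈ Finset.range (n + 1), a i := Finset.sum_nonneg fun i _ => ha i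
      have h5 := rad_max (F.image (fun f => (π' f, π f))) hne
        (fun x j => φ x.1 j - φ x.2 j) (D n) (1 + ∑ i ∈ Finset.range (n + 1), a i) (hD n)
        (by linarith) ?_ ?_
      · linarith
      · intro x hx
        obtain ⟨f, hf, rfl⟩ := Finset.mem_image.mp hx
        refine hd n _ (hπ' f hf) _ (hπ f hf) ?_
        have e1 : π' f - π f = (f - π f) - (f - π' f) := by abel
        rw [e1]
        refine (map_sub_le_add ρ _ _).trans ?_
        have := hπt f hf
        have := hπ't f hf
        have := htd n
        linarith
      · rw [Real.exp_add]
        have h2e : (2 : ℝ) ≤ Real.exp 1 := by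
          have := Real.add_one_le_exp (1 : ℝ); linarith
        have := Real.exp_pos (∑ i ∈ Finset.range (n + 1), a i)
        nlinarith [Nat.cast_nonneg (α := ℝ) (F.image (fun f => (π' f, π f))).card]

end


noncomputable section

lemma chain_weights (β : ℝ) (hβ : 2 ≤ β) (hβ4 : β ≤ 4) (K n : ℕ) :
    ∑ k ∈ Finset.range n, Real.sqrt ((β⁻¹) ^ k * (1 + ∑ i ∈ Finset.range (k + 1), β ^ (min i K))) ≤
      2 * (K + 1) + 16 := by
  have hβ0 : 0 < β := by linarith
  have hA : ∀ k, k ≤ K → 1 + ∑ i ∈ Finset.range (k + 1), β ^ (min i K) ≤ β ^ (k + 1) := by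
    intro k
    induction k with
    | zero => intro _; simp; linarith
    | succ k ih =>
      intro hk
      rw [Finset.sum_range_succ, min_eq_left hk]
      have h1 := ih (by omega)
      have h2 : β ^ (k + 1 + 1) = β * β ^ (k + 1) := by ring
      have h3 : 0 < β ^ (k + 1) := by positivity
      nlinarith
  have hB : ∀ j, 1 + ∑ i ∈ Finset.range (K + j + 1), β ^ (min i K) ≤ β ^ K * (4 + j) := by
    intro j
    induction j with
    | zero =>
      have := hA K le_rfl
      simp only [add_zero, Nat.cast_zero]
      refine this.trans ?_
      rw [pow_succ]
      gcongr
    | succ j ih =>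
      rw [← add_assoc K j 1, Finset.sum_range_succ, min_eq_right (by omega)]
      push_cast
      linarith
  have hw1 : ∀ k, k ≤ K → Real.sqrt ((β⁻¹) ^ k * (1 + ∑ i ∈ Finset.range (k + 1), β ^ (min i K))) ≤ 2 := by
    intro k hk
    rw [Real.sqrt_le_left (by norm_num)]
    have h1 := mul_le_mul_of_nonneg_left (hA k hk) (show 0 ≤ (β⁻¹) ^ k by positivity)
    refine h1.trans ?_
    rw [pow_succ, ← mul_assoc, ← mul_pow, inv_mul_cancel₀ hβ0.ne', one_pow]
    linarith
  have hw2 : ∀ j, Real.sqrt ((β⁻¹) ^ (K + j) * (1 + ∑ i ∈ Finset.range (K + j + 1), β ^ (min i K)))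
      ≤ 4 * (3 / 4) ^ j := by
    intro j
    rw [Real.sqrt_le_left (by positivity)]
    have h1 := mul_le_mul_of_nonneg_left (hB j) (show 0 ≤ (β⁻¹) ^ (K + j) by positivity)
    refine h1.trans ?_
    have h2 : (β⁻¹) ^ (K + j) * (β ^ K * (4 + j)) = (β⁻¹) ^ j * (4 + j) := by
      rw [pow_add]
      have : (β⁻¹) ^ K * β ^ K = 1 := by rw [← mul_pow, inv_mul_cancel₀ hβ0.ne', one_pow]
      calc _ = ((β⁻¹) ^ K * β ^ K) * ((β⁻¹) ^ j * (4 + j)) := by ring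
        _ = _ := by rw [this, one_mul]
    rw [h2]
    have h3 : (β⁻¹) ^ j ≤ (1 / 2 : ℝ) ^ j := by
      gcongr
      rw [one_div]; exact inv_anti₀ (by norm_num) hβ
    have h4 : (1 : ℝ) + j * (1 / 8) ≤ (9 / 8) ^ j := by
      have := one_add_mul_le_pow (show (-2 : ℝ) ≤ 1 / 8 by norm_num) j
      norm_num at this ⊢
      linarith
    have h5 : (4 * (3 / 4 : ℝ) ^ j) ^ 2 = (1 / 2) ^ j * (16 * (9 / 8) ^ j) := by
      rw [mul_pow, ← pow_mul, mul_comm j 2, pow_mul]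
      have : ((3 / 4 : ℝ) ^ 2) ^ j = (1 / 2) ^ j * (9 / 8) ^ j := by
        rw [← mul_pow]; norm_num
      rw [this]; ring
    rw [h5]
    have hj : (0 : ℝ) ≤ j := Nat.cast_nonneg j
    apply mul_le_mul h3 (by linarith) (by linarith) (by positivity)
  have hsum : ∀ j, ∑ k ∈ Finset.range (K + 1 + j),
      Real.sqrt ((β⁻¹) ^ k * (1 + ∑ i ∈ Finset.range (k + 1), β ^ (min i K))) ≤
      2 * (K + 1) + 16 - 16 * (3 / 4) ^ j := by
    intro j
    induction j with
    | zero =>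
      simp only [add_zero, pow_zero, mul_one]
      have := Finset.sum_le_card_nsmul (Finset.range (K + 1))
        (fun k => Real.sqrt ((β⁻¹) ^ k * (1 + ∑ i ∈ Finset.range (k + 1), β ^ (min i K)))) 2
        (fun k hk => hw1 k (by simp at hk; omega))
      simp at this
      simp
      linarith
    | succ j ih =>
      rw [← add_assoc, Finset.sum_range_succ]
      have h := hw2 (j + 1)
      rw [show K + (j + 1) = K + 1 + j by ring] at h
      have h3 : (0 : ℝ) < (3 / 4) ^ j := by positivity
      rw [pow_succ] at h ⊢
      linarith
  have h1 : Finset.range n ⊆ Finset.range (K + 1 + n) := Finset.range_mono (by omega)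
  have h2 := Finset.sum_le_sum_of_subset_of_nonneg
    (f := fun k => Real.sqrt ((β⁻¹) ^ k * (1 + ∑ i ∈ Finset.range (k + 1), β ^ (min i K)))) h1
    (fun _ _ _ => Real.sqrt_nonneg _)
  have h3 := hsum n
  have h4 : (0 : ℝ) < (3 / 4) ^ n := by positivity
  linarith

lemma chain_final {E : Type*} [AddCommGroup E] [Module ℝ E] (ρ : Seminorm ℝ E)
    {m : ℕ} (F : Finset E) (hF : F.Nonempty) (h0 : (0 : E) ∈ F) (φ : E → Fin m → ℝ) (hφ0 : φ 0 = 0)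
    (t : ℕ → ℝ) (ht : ∀ k, 0 < t k) (htd : ∀ k, t (k + 1) ≤ t k)
    (β c s : ℝ) (hβ : 2 ≤ β) (hβ4 : β ≤ 4) (hc : 1 ≤ c) (hs : 0 < s) (K : ℕ)
    (hstart : ∀ f ∈ F, ρ f ≤ t 0)
    (hent : ∀ k, ∀ g ∈ F, ∀ S ⊆ F, (∀ f ∈ S, ρ (f - g) ≤ t k) →
      (∀ f ∈ S, ∀ f' ∈ S, f ≠ f' → t (k + 1) < ρ (f - f')) →
        (S.card : ℝ) ≤ Real.exp (c * β ^ (min k K)))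
    (hd : ∀ k, ∀ f ∈ F, ∀ g ∈ F, ρ (f - g) ≤ 2 * t k →
      ∑ j, (φ f j - φ g j) ^ 2 ≤ s ^ 2 * (β⁻¹) ^ k) :
    ravg (fun e => F.sup' hF (fun f => |rdot e (φ f)|)) ≤
      s * Real.sqrt (2 * c) * (2 * (K + 1) + 16) := by
  have hβ0 : 0 < β := by linarith
  have hDsq : ∀ k : ℕ, (s * Real.sqrt ((β⁻¹) ^ k)) ^ 2 = s ^ 2 * (β⁻¹) ^ k := fun k => by
    rw [mul_pow, Real.sq_sqrt (by positivity)]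
  have main : ∀ n : ℕ, ravg (fun e => F.sup' hF (fun f => |rdot e (φ f)|)) ≤
      s * Real.sqrt (2 * c) * (2 * (K + 1) + 16) + m * (s * Real.sqrt ((β⁻¹) ^ n)) := by
    intro n
    obtain ⟨π, hπ, hπt, -, havg⟩ := chain_aux ρ F hF h0 φ hφ0 t (fun k => c * β ^ (min k K))
      (fun k => s * Real.sqrt ((β⁻¹) ^ k)) ht htd (fun k => by positivity)
      (fun k => by positivity) hstart hent
      (fun k f hf g hg h => by rw [hDsq]; exact hd k f hf g hg h) n
    have h1 : ∀ e : Fin m → Bool, F.sup' hF (fun f => |rdot e (φ f)|) ≤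
        F.sup' hF (fun f => |rdot e (φ (π f))|) + m * (s * Real.sqrt ((β⁻¹) ^ n)) := by
      intro e
      refine Finset.sup'_le _ _ fun f hf => ?_
      have h2 := Finset.le_sup' (fun f => |rdot e (φ (π f))|) hf
      have h3 := abs_rdot_le e (fun j => φ f j - φ (π f) j)
      have h4 : ∑ j, |φ f j - φ (π f) j| ≤ ∑ _j : Fin m, (s * Real.sqrt ((β⁻¹) ^ n)) := by
        refine Finset.sum_le_sum fun j _ => ?_
        have h5 := hd n f hf (π f) (hπ f hf) (by have := hπt f hf; have := ht n; linarith)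
        rw [← hDsq] at h5
        have h6 := Finset.single_le_sum (f := fun j => (φ f j - φ (π f) j) ^ 2)
          (fun j _ => sq_nonneg _) (Finset.mem_univ j)
        exact abs_le_of_sq_le_sq (h6.trans h5) (by positivity)
      simp only [Finset.sum_const, Finset.card_univ, Fintype.card_fin, nsmul_eq_mul] at h4
      rw [rdot_sub] at h3
      have h7 := abs_add_le (rdot e (φ (π f))) (rdot e (φ f) - rdot e (φ (π f)))
      rw [add_sub_cancel] at h7
      linarith
    have h8 := ravg_mono h1
    rw [ravg_add, ravg_const] at h8
    have h9 : ∑ k ∈ Finset.range n, s * Real.sqrt ((β⁻¹) ^ k) *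
        Real.sqrt (2 * (1 + ∑ i ∈ Finset.range (k + 1), c * β ^ (min i K))) ≤
        s * Real.sqrt (2 * c) * (2 * (K + 1) + 16) := by
      have h10 := mul_le_mul_of_nonneg_left (chain_weights β hβ hβ4 K n)
        (show 0 ≤ s * Real.sqrt (2 * c) by positivity)
      refine le_trans ?_ h10
      rw [Finset.mul_sum]
      refine Finset.sum_le_sum fun k _ => ?_
      rw [mul_assoc, mul_assoc]
      refine mul_le_mul_of_nonneg_left ?_ hs.le
      rw [← Real.sqrt_mul (by positivity), ← Real.sqrt_mul (by positivity)]
      apply Real.sqrt_le_sqrt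
      rw [← Finset.mul_sum]
      have : 0 ≤ (β⁻¹) ^ k := by positivity
      nlinarith
    linarith
  have hlim : Filter.Tendsto (fun n : ℕ => s * Real.sqrt (2 * c) * (2 * (K + 1) + 16) +
      m * (s * Real.sqrt ((β⁻¹) ^ n))) Filter.atTop
      (nhds (s * Real.sqrt (2 * c) * (2 * (K + 1) + 16) + m * (s * Real.sqrt 0))) := by
    refine Filter.Tendsto.add tendsto_const_nhds (Filter.Tendsto.const_mul _
      (Filter.Tendsto.const_mul _ ((Real.continuous_sqrt.tendsto _).comp ?_)))
    exact tendsto_pow_atTop_nhds_zero_of_lt_one (by positivity)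
      (by rw [inv_lt_one₀ hβ0]; linarith)
  have := ge_of_tendsto' hlim main
  simpa using this

end


noncomputable section

section Gauss

open scoped Pointwise

variable {E : Type*} [NormedAddCommGroup E] [InnerProductSpace ℝ E] [FiniteDimensional ℝ E]
  [MeasurableSpace E] [BorelSpace E]

/-- the unnormalised Gaussian weight -/
def gw (y : E) : ENNReal := ENNReal.ofReal (Real.exp (-(‖y‖ ^ 2 / 2)))

lemma gw_meas : Measurable (gw : E → ENNReal) := by
  unfold gw
  fun_prop

variable (E) in
/-- the unnormalised Gaussian measure -/
def gs : Measure E := (volume : Measure E).withDensity gw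

lemma gs_univ : gs E Set.univ ≠ 0 ∧ gs E Set.univ ≠ ⊤ := by
  have h1 := GaussianFourier.integral_rexp_neg_mul_sq_norm (V := E) (show (0 : ℝ) < 1 / 2 by norm_num)
  have h2 : (0 : ℝ) < (Real.pi / (1 / 2)) ^ ((Module.finrank ℝ E : ℝ) / 2) := by positivity
  have h3 : Integrable (fun y : E => Real.exp (-(1 / 2) * ‖y‖ ^ 2)) := by
    by_contra h
    rw [integral_undef h] at h1
    linarith
  have h4 := ofReal_integral_eq_lintegral_ofReal h3 (Filter.Eventually.of_forall fun y => (Real.exp_pos _).le)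
  have h5 : gs E Set.univ = ENNReal.ofReal ((Real.pi / (1 / 2)) ^ ((Module.finrank ℝ E : ℝ) / 2)) := by
    rw [← h1, h4]
    unfold gs
    rw [withDensity_apply _ MeasurableSet.univ, Measure.restrict_univ]
    refine lintegral_congr fun y => ?_
    unfold gw
    congr 2
    ring
  rw [h5]
  exact ⟨by simpa using h2, ENNReal.ofReal_ne_top⟩

lemma gs_lintegral (f : E → ENNReal) (hf : Measurable f) :
    ∫⁻ y, f y ∂(gs E) = ∫⁻ y, gw y * f y := by
  unfold gs
  rw [lintegral_withDensity_eq_lintegral_mul _ gw_meas hf]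
  rfl

lemma gs_shift (K : Set E) (hK : MeasurableSet K) (hsym : ∀ y ∈ K, -y ∈ K) (z : E) :
    ENNReal.ofReal (Real.exp (-(‖z‖ ^ 2 / 2))) * gs E K ≤ gs E ((fun y => y - z) ⁻¹' K) := by
  set I : E → ENNReal := K.indicator 1 with hI
  have hIm : Measurable I := measurable_one.indicator hK
  have hIneg : ∀ y, I (-y) = I y := by
    intro y
    by_cases hy : y ∈ K
    · simp [hI, hy, hsym y hy]
    · have : -y ∉ K := fun h => hy (by simpa using hsym _ h)
      simp [hI, hy, this]
  have hpre : MeasurableSet ((fun y => y - z) ⁻¹' K) := (measurable_sub_const z) hK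
  have e1 : gs E ((fun y => y - z) ⁻¹' K) = ∫⁻ y, gw y * I (y - z) := by
    rw [← lintegral_indicator_one hpre, gs_lintegral _ (measurable_one.indicator hpre)]
    rfl
  have e2 : gs E ((fun y => y - z) ⁻¹' K) = ∫⁻ y, gw (y + z) * I y := by
    rw [e1, ← lintegral_add_right_eq_self _ z]
    simp
  have e3 : gs E ((fun y => y - z) ⁻¹' K) = ∫⁻ y, gw (-y + z) * I y := by
    rw [e2, ← lintegral_neg_eq_self]
    simp [hIneg]
  have e4 : gs E K = ∫⁻ y, gw y * I y := by
    rw [← lintegral_indicator_one hK, gs_lintegral _ (measurable_one.indicator hK)]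
  have hm1 : Measurable fun y : E => gw (y + z) * I y := (gw_meas.comp (measurable_add_const z)).mul hIm
  have key : 2 * (ENNReal.ofReal (Real.exp (-(‖z‖ ^ 2 / 2))) * gs E K) ≤
      2 * gs E ((fun y => y - z) ⁻¹' K) := by
    calc 2 * (ENNReal.ofReal (Real.exp (-(‖z‖ ^ 2 / 2))) * gs E K)
        = ∫⁻ y, 2 * (ENNReal.ofReal (Real.exp (-(‖z‖ ^ 2 / 2))) * (gw y * I y)) := by
          have hm0 : Measurable fun y : E => gw y * I y := gw_meas.mul hIm
          rw [lintegral_const_mul _ (hm0.const_mul _), lintegral_const_mul _ hm0, e4]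
      _ ≤ ∫⁻ y, (gw (y + z) * I y + gw (-y + z) * I y) := by
          refine lintegral_mono fun y => ?_
          simp only
          rw [← add_mul, ← mul_assoc, ← mul_assoc]
          gcongr
          unfold gw
          rw [← ENNReal.ofReal_add (by positivity) (by positivity),
            show (2 : ENNReal) = ENNReal.ofReal 2 by simp,
            ← ENNReal.ofReal_mul (by positivity), ← ENNReal.ofReal_mul (by positivity)]
          apply ENNReal.ofReal_le_ofReal
          have h1 : ‖y + z‖ ^ 2 = ‖y‖ ^ 2 + 2 * inner ℝ y z + ‖z‖ ^ 2 := norm_add_sq_real y z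
          have h2 : ‖-y + z‖ ^ 2 = ‖y‖ ^ 2 - 2 * inner ℝ y z + ‖z‖ ^ 2 := by
            rw [norm_add_sq_real]; simp; ring
          rw [h1, h2]
          have h3 : Real.exp (-((‖y‖ ^ 2 + 2 * inner ℝ y z + ‖z‖ ^ 2) / 2)) =
            Real.exp (-(‖z‖ ^ 2 / 2)) * Real.exp (-(‖y‖ ^ 2 / 2)) * Real.exp (-inner ℝ y z) := by
            rw [← Real.exp_add, ← Real.exp_add]; congr 1; ring
          have h4 : Real.exp (-((‖y‖ ^ 2 - 2 * inner ℝ y z + ‖z‖ ^ 2) / 2)) =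
            Real.exp (-(‖z‖ ^ 2 / 2)) * Real.exp (-(‖y‖ ^ 2 / 2)) * Real.exp (inner ℝ y z) := by
            rw [← Real.exp_add, ← Real.exp_add]; congr 1; ring
          rw [h3, h4]
          have h5 := Real.add_one_le_exp (inner ℝ y z)
          have h6 := Real.add_one_le_exp (-inner ℝ y z)
          have h7 : 0 < Real.exp (-(‖z‖ ^ 2 / 2)) * Real.exp (-(‖y‖ ^ 2 / 2)) := by positivity
          nlinarith
      _ = 2 * gs E ((fun y => y - z) ⁻¹' K) := by
          rw [lintegral_add_left hm1, ← e2, ← e3, two_mul]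
  have := (ENNReal.mul_le_mul_iff_right (a := 2) (by norm_num) (by norm_num)).mp key
  exact this

lemma gs_exp (w : E) : ∫⁻ y, ENNReal.ofReal (Real.exp (inner ℝ w y)) ∂(gs E) =
    ENNReal.ofReal (Real.exp (‖w‖ ^ 2 / 2)) * gs E Set.univ := by
  rw [gs_lintegral _ (by fun_prop)]
  have h1 : gs E Set.univ = ∫⁻ y : E, gw (y - w) := by
    rw [lintegral_sub_right_eq_self (fun y : E => gw y) w]
    unfold gs
    rw [withDensity_apply _ MeasurableSet.univ, Measure.restrict_univ]
  have hm : Measurable fun y : E => gw (y - w) := gw_meas.comp (measurable_sub_const w)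
  rw [h1, ← lintegral_const_mul _ hm]
  refine lintegral_congr fun y => ?_
  unfold gw
  rw [← ENNReal.ofReal_mul (by positivity), ← ENNReal.ofReal_mul (by positivity),
    ← Real.exp_add, ← Real.exp_add]
  congr 2
  rw [norm_sub_sq_real, real_inner_comm]
  ring

/-- Dual Sudakov type estimate. -/
lemma gauss_entropy (ρ : Seminorm ℝ E) (hρ : Continuous ρ) (κ : ℝ) (hκ : 0 < κ)
    (hg : gs E Set.univ ≤ 2 * gs E {y | ρ y ≤ κ}) (S : Finset E) (g : E) (s τ : ℝ) (hτ : 0 < τ)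
    (hs : ∀ a ∈ S, ‖a - g‖ ^ 2 ≤ s)
    (hsep : ∀ a ∈ S, ∀ b ∈ S, a ≠ b → τ < ρ (a - b)) :
    (S.card : ℝ) ≤ 2 * Real.exp (2 * κ ^ 2 * s / τ ^ 2) := by
  set K : Set E := {y | ρ y ≤ κ}
  have hK : MeasurableSet K := (isClosed_le hρ continuous_const).measurableSet
  have hsym : ∀ y ∈ K, -y ∈ K := fun y hy => by
    simp only [K, Set.mem_ofPred_eq, map_neg_eq_map] at hy ⊢; exact hy
  set z : E → E := fun a => (2 * κ / τ) • (a - g)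
  have hdisj : (S : Set E).PairwiseDisjoint (fun a => (fun y => y - z a) ⁻¹' K) := by
    intro a ha b hb hab
    refine Set.disjoint_left.mpr fun y hya hyb => ?_
    simp only [Set.mem_preimage, K, Set.mem_ofPred_eq] at hya hyb
    have h1 : (2 * κ / τ) • (a - b) = (y - z b) - (y - z a) := by
      simp only [z, smul_sub]; abel
    have h2 : ρ ((2 * κ / τ) • (a - b)) ≤ κ + κ := by
      rw [h1]; exact (map_sub_le_add ρ _ _).trans (by linarith)
    rw [map_smul_eq_mul, Real.norm_of_nonneg (by positivity)] at h2
    have h3 := mul_lt_mul_of_pos_left (hsep a ha b hb hab) (show 0 < 2 * κ / τ by positivity)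
    have h4 : 2 * κ / τ * τ = 2 * κ := by field_simp
    linarith
  have h1 : ∑ a ∈ S, gs E ((fun y => y - z a) ⁻¹' K) ≤ gs E Set.univ := by
    rw [← measure_biUnion_finset hdisj (fun a _ => (measurable_sub_const (z a)) hK)]
    exact measure_mono (Set.subset_univ _)
  have h2 : ∀ a ∈ S, ENNReal.ofReal (Real.exp (-(2 * κ ^ 2 * s / τ ^ 2))) * gs E K ≤
      gs E ((fun y => y - z a) ⁻¹' K) := by
    intro a ha
    refine le_trans ?_ (gs_shift K hK hsym (z a))
    gcongr ENNReal.ofReal (Real.exp (-?_)) * _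
    have hz : ‖z a‖ = 2 * κ / τ * ‖a - g‖ := by
      simp only [z]
      rw [norm_smul, Real.norm_of_nonneg (by positivity)]
    rw [hz, mul_pow]
    have := mul_le_mul_of_nonneg_left (hs a ha) (show 0 ≤ 2 * κ ^ 2 / τ ^ 2 by positivity)
    have e : (2 * κ / τ) ^ 2 * ‖a - g‖ ^ 2 / 2 = 2 * κ ^ 2 / τ ^ 2 * ‖a - g‖ ^ 2 := by
      field_simp
    rw [e]
    refine this.trans (le_of_eq ?_)
    ring
  have h3 := (Finset.sum_le_sum h2).trans (h1.trans hg)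
  rw [Finset.sum_const, nsmul_eq_mul] at h3
  have hKtop : gs E K ≠ ⊤ := ne_top_of_le_ne_top gs_univ.2 (measure_mono (Set.subset_univ _))
  have hK0 : gs E K ≠ 0 := fun h => by
    rw [h] at hg; simp at hg; exact gs_univ.1 (by simpa using hg)
  rw [← mul_assoc] at h3
  have h4 := (ENNReal.mul_le_mul_iff_left hK0 hKtop).mp h3
  have h5 := ENNReal.toReal_mono (by norm_num) h4
  rw [ENNReal.toReal_mul, ENNReal.toReal_ofReal (Real.exp_pos _).le] at h5
  simp only [ENNReal.toReal_natCast, ENNReal.toReal_ofNat] at h5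
  rw [Real.exp_neg] at h5
  have := Real.exp_pos (2 * κ ^ 2 * s / τ ^ 2)
  rwa [← div_eq_mul_inv, div_le_iff₀ this] at h5

/-- Volumetric estimate. -/
lemma vol_entropy (ρ : Seminorm ℝ E) (hρ : Continuous ρ) (hb : ∀ z, ρ z ≤ 1 → ‖z‖ ≤ 2)
    (S : Finset E) (g : E) (τ : ℝ) (hτ : 0 < τ)
    (hs : ∀ a ∈ S, ρ (a - g) ≤ 2 * τ)
    (hsep : ∀ a ∈ S, ∀ b ∈ S, a ≠ b → τ < ρ (a - b)) :
    (S.card : ℝ) ≤ 5 ^ (Module.finrank ℝ E) := by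
  set K : Set E := {y | ρ y ≤ τ / 2}
  have hK : MeasurableSet K := (isClosed_le hρ continuous_const).measurableSet
  have hdisj : (S : Set E).PairwiseDisjoint (fun a => (fun y => y - a) ⁻¹' K) := by
    intro a ha b hb hab
    refine Set.disjoint_left.mpr fun y hya hyb => ?_
    simp only [Set.mem_preimage, K, Set.mem_ofPred_eq] at hya hyb
    have h1 : (a - b) = (y - b) - (y - a) := by abel
    have h2 : ρ (a - b) ≤ τ / 2 + τ / 2 := by
      rw [h1]; exact (map_sub_le_add ρ _ _).trans (by linarith)
    have := hsep a ha b hb hab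
    linarith
  have hvol : ∀ a : E, volume ((fun y => y - a) ⁻¹' K) = volume K := by
    intro a
    simp only [sub_eq_add_neg]
    exact measure_preimage_add_right _ _ _
  have h1 : ∑ a ∈ S, volume ((fun y => y - a) ⁻¹' K) ≤ volume ((fun y => y - g) ⁻¹' ((5 : ℝ) • K)) := by
    rw [← measure_biUnion_finset hdisj (fun a _ => (measurable_sub_const a) hK)]
    refine measure_mono ?_
    intro y hy
    simp only [Set.mem_iUnion, Set.mem_preimage] at hy ⊢
    obtain ⟨a, ha, hy⟩ := hy
    rw [Set.mem_smul_set_iff_inv_smul_mem₀ (by norm_num)]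
    simp only [K, Set.mem_ofPred_eq] at hy ⊢
    rw [map_smul_eq_mul, Real.norm_of_nonneg (by norm_num)]
    have e : y - g = (y - a) + (a - g) := by abel
    have h2 : ρ (y - g) ≤ τ / 2 + 2 * τ := by
      rw [e]
      refine (map_add_le_add ρ _ _).trans ?_
      have := hs a ha
      linarith
    linarith
  have h2 : volume ((fun y => y - g) ⁻¹' ((5 : ℝ) • K)) = volume ((5 : ℝ) • K) := by
    simp only [sub_eq_add_neg]
    exact measure_preimage_add_right _ _ _
  rw [h2, Measure.addHaar_smul] at h1
  simp only [hvol, Finset.sum_const, nsmul_eq_mul] at h1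
  have hK0 : volume K ≠ 0 := by
    have hopen : IsOpen {y | ρ y < τ / 2} := isOpen_lt hρ continuous_const
    have : 0 < volume {y | ρ y < τ / 2} := hopen.measure_pos _ ⟨0, by simp; linarith⟩
    exact (this.trans_le (measure_mono fun y hy => by
      simp only [K, Set.mem_ofPred_eq] at hy ⊢; exact hy.le)).ne'
  have hKtop : volume K ≠ ⊤ := by
    have hsub : K ⊆ Metric.closedBall 0 τ := by
      intro y hy
      simp only [K, Set.mem_ofPred_eq] at hy
      have h3 := hb ((2 / τ) • y) (by
        rw [map_smul_eq_mul, Real.norm_of_nonneg (by positivity)]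
        rw [div_mul_eq_mul_div, div_le_one hτ]; linarith)
      rw [norm_smul, Real.norm_of_nonneg (by positivity), div_mul_eq_mul_div, div_le_iff₀ hτ] at h3
      rw [mem_closedBall_zero_iff]
      linarith
    exact ne_top_of_le_ne_top (isCompact_closedBall (0 : E) τ).measure_lt_top.ne (measure_mono hsub)
  have h4 := (ENNReal.mul_le_mul_iff_left hK0 hKtop).mp h1
  have h5 := ENNReal.toReal_mono (by simp) h4
  rw [ENNReal.toReal_ofReal (by positivity)] at h5
  simp only [ENNReal.toReal_natCast] at h5
  rwa [abs_of_pos (by positivity)] at h5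

end Gauss

end


noncomputable section

section LrNorm

variable {E : Type*} [NormedAddCommGroup E] [InnerProductSpace ℝ E] [FiniteDimensional ℝ E]
  [MeasurableSpace E] [BorelSpace E]
variable {Ω : Type*} [TopologicalSpace Ω] [CompactSpace Ω] [MeasurableSpace Ω] [BorelSpace Ω]
  [SecondCountableTopology Ω]

lemma cont_integrable (ν : Measure Ω) [IsFiniteMeasure ν] {f : Ω → ℝ} (hf : Continuous f) :
    Integrable f ν := by
  obtain ⟨C, hC⟩ := isCompact_univ.exists_bound_of_continuousOn hf.continuousOn
  exact Integrable.of_bound hf.aestronglyMeasurable C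
    (Filter.Eventually.of_forall fun x => hC x (Set.mem_univ x))

/-- the `L_r(ν)` seminorm on the coefficient space -/
lemma exists_lr_seminorm (ν : Measure Ω) [IsFiniteMeasure ν] (u : Ω → E) (hu : Continuous u)
    (r : ℕ) (hr : 1 ≤ r) :
    ∃ ρ : Seminorm ℝ E, Continuous ρ ∧ ∀ z, ρ z ^ r = ∫ ω, |inner ℝ (u ω) z| ^ r ∂ν := by
  have : Fact (1 ≤ (r : ENNReal)) := ⟨by exact_mod_cast hr⟩
  let A : E →ₗ[ℝ] C(Ω, ℝ) :=
    { toFun := fun z => ⟨fun ω => inner ℝ (u ω) z, by fun_prop⟩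
      map_add' := fun z w => by ext ω; simp [inner_add_right]
      map_smul' := fun c z => by ext ω; simp [inner_smul_right] }
  let T : E →ₗ[ℝ] Lp ℝ (r : ENNReal) ν := (ContinuousMap.toLp (E := ℝ) (r : ENNReal) ν ℝ).toLinearMap ∘ₗ A
  refine ⟨(normSeminorm ℝ (Lp ℝ (r : ENNReal) ν)).comp T, ?_, fun z => ?_⟩
  · have : Continuous T := T.continuous_of_finiteDimensional
    exact continuous_norm.comp this
  · have h1 : ((normSeminorm ℝ (Lp ℝ (r : ENNReal) ν)).comp T) z = ‖T z‖ := rfl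
    have hr0 : (r : ENNReal) ≠ 0 := by exact_mod_cast (by omega : r ≠ 0)
    have hae : (T z : Ω → ℝ) =ᵐ[ν] fun ω => inner ℝ (u ω) z :=
      ContinuousMap.coeFn_toLp (p := (r : ENNReal)) ν (𝕜 := ℝ) (A z)
    rw [h1, Lp.norm_def, (Lp.memLp (T z)).eLpNorm_eq_integral_rpow_norm hr0 (by simp)]
    have hnn : 0 ≤ ∫ a, ‖(T z : Ω → ℝ) a‖ ^ (r : ENNReal).toReal ∂ν :=
      integral_nonneg fun _ => by positivity
    rw [ENNReal.toReal_ofReal (by positivity)]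
    have h2 : (r : ENNReal).toReal = r := by simp
    rw [h2] at hnn ⊢
    rw [Real.rpow_inv_natCast_pow hnn (by omega)]
    refine integral_congr_ae ?_
    filter_upwards [hae] with ω hω
    rw [hω, Real.rpow_natCast, Real.norm_eq_abs]

lemma abs_pow_le_exp (s : ℝ) (r : ℕ) (hr : 1 ≤ r) :
    |s| ^ r ≤ (r : ℝ) ^ r * (Real.exp s + Real.exp (-s)) := by
  have hr0 : (0 : ℝ) < r := by exact_mod_cast hr
  have h1 : |s| / r ≤ Real.exp (|s| / r) := by
    have := Real.add_one_le_exp (|s| / r); linarith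
  have h2 : (|s| / r) ^ r ≤ Real.exp |s| := by
    calc (|s| / r) ^ r ≤ (Real.exp (|s| / r)) ^ r := by gcongr
      _ = Real.exp |s| := by
        rw [← Real.exp_nat_mul]; congr 1; field_simp
  rw [div_pow, div_le_iff₀ (by positivity)] at h2
  have h3 : Real.exp |s| ≤ Real.exp s + Real.exp (-s) := by
    rcases abs_cases s with h | h <;> rw [h.1]
    · linarith [Real.exp_pos (-s)]
    · linarith [Real.exp_pos s]
  have : (0 : ℝ) < r ^ r := by positivity
  nlinarith

lemma gs_moment (w : E) (H : ℝ) (hH : 0 < H) (hw : ‖w‖ ≤ H) (r : ℕ) (hr : 1 ≤ r) :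
    ∫⁻ y, ENNReal.ofReal (|inner ℝ w y| ^ r) ∂(gs E) ≤
      ENNReal.ofReal (2 * (2 * Real.sqrt r * H) ^ r) * gs E Set.univ := by
  have hr0 : (0 : ℝ) < r := by exact_mod_cast hr
  have hsr : 0 < Real.sqrt r := Real.sqrt_pos.mpr hr0
  set l := Real.sqrt r / H with hl
  have hl0 : 0 < l := by positivity
  have h1 : ∀ y : E, ENNReal.ofReal (|inner ℝ w y| ^ r) ≤
      ENNReal.ofReal ((Real.sqrt r * H) ^ r) * (ENNReal.ofReal (Real.exp (inner ℝ (l • w) y)) +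
        ENNReal.ofReal (Real.exp (inner ℝ (-(l • w)) y))) := by
    intro y
    rw [← ENNReal.ofReal_add (by positivity) (by positivity), ← ENNReal.ofReal_mul (by positivity)]
    apply ENNReal.ofReal_le_ofReal
    have h2 := abs_pow_le_exp (inner ℝ (l • w) y) r hr
    rw [inner_neg_left]
    have h3 : |inner ℝ (l • w) y| ^ r = l ^ r * |inner ℝ w y| ^ r := by
      rw [real_inner_smul_left, abs_mul, abs_of_pos hl0, mul_pow]
    rw [h3] at h2
    have h4 : (Real.sqrt r * H) ^ r * l ^ r = (r : ℝ) ^ r := by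
      rw [← mul_pow]; congr 1
      rw [hl]; field_simp; rw [Real.sq_sqrt hr0.le]
    have h5 : 0 < l ^ r := by positivity
    refine le_of_mul_le_mul_left ?_ h5
    rw [← mul_assoc, mul_comm (l ^ r) ((Real.sqrt r * H) ^ r), h4]
    exact h2
  refine (lintegral_mono h1).trans ?_
  have hm : Measurable fun y : E => ENNReal.ofReal (Real.exp (inner ℝ (l • w) y)) := by fun_prop
  have hm2 : Measurable fun y : E => ENNReal.ofReal (Real.exp (inner ℝ (-(l • w)) y)) := by fun_prop
  have hm3 : Measurable fun y : E => ENNReal.ofReal (Real.exp (inner ℝ (l • w) y)) +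
      ENNReal.ofReal (Real.exp (inner ℝ (-(l • w)) y)) := hm.add hm2
  rw [lintegral_const_mul _ hm3, lintegral_add_left hm, gs_exp, gs_exp, norm_neg, ← two_mul,
    ← mul_assoc, ← mul_assoc]
  gcongr
  rw [show (2 : ENNReal) = ENNReal.ofReal 2 by simp, ← ENNReal.ofReal_mul (by positivity),
    ← ENNReal.ofReal_mul (by positivity)]
  apply ENNReal.ofReal_le_ofReal
  have h6 : ‖l • w‖ ^ 2 ≤ r := by
    rw [norm_smul, Real.norm_of_nonneg hl0.le, mul_pow]
    have : ‖w‖ ^ 2 ≤ H ^ 2 := by gcongr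
    calc l ^ 2 * ‖w‖ ^ 2 ≤ l ^ 2 * H ^ 2 := by gcongr
      _ = (r : ℝ) := by rw [hl, div_pow, Real.sq_sqrt hr0.le]; field_simp
  have h7 : Real.exp (‖l • w‖ ^ 2 / 2) ≤ 2 ^ r := by
    calc Real.exp (‖l • w‖ ^ 2 / 2) ≤ Real.exp (r * (1 / 2)) := by
          apply Real.exp_le_exp.mpr; linarith
      _ = Real.exp (1 / 2) ^ r := by rw [Real.exp_nat_mul]
      _ ≤ 2 ^ r := by
        gcongr
        have h8 : Real.exp (1 / 2) ^ 2 = Real.exp 1 := by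
          rw [← Real.exp_nat_mul]; norm_num
        have h9 := Real.exp_one_lt_d9
        have h10 := Real.exp_pos (1 / 2)
        nlinarith
  have h8 : (2 * Real.sqrt r * H) ^ r = (Real.sqrt r * H) ^ r * 2 ^ r := by
    rw [← mul_pow]; congr 1; ring
  rw [h8]
  have : 0 < (Real.sqrt r * H) ^ r := by positivity
  nlinarith

/-- the Gaussian measure of the `L_r` ball -/
lemma gauss_half (ν : Measure Ω) [IsFiniteMeasure ν] (hν : ν Set.univ ≤ 2) (u : Ω → E)
    (hu : Continuous u) (H : ℝ) (hH : 0 < H) (huH : ∀ ω, ‖u ω‖ ≤ H) (r : ℕ) (hr : 1 ≤ r)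
    (ρ : Seminorm ℝ E) (hρc : Continuous ρ) (hρ : ∀ z, ρ z ^ r = ∫ ω, |inner ℝ (u ω) z| ^ r ∂ν) :
    gs E Set.univ ≤ 2 * gs E {y | ρ y ≤ 16 * Real.sqrt r * H} := by
  have hr0 : (0 : ℝ) < r := by exact_mod_cast hr
  have hsr : 0 < Real.sqrt r := Real.sqrt_pos.mpr hr0
  have : IsFiniteMeasure (gs E) := ⟨gs_univ.2.lt_top⟩
  set κ := 16 * Real.sqrt r * H with hκ
  have hκ0 : 0 < κ := by positivity
  have h1 : ∫⁻ y, ENNReal.ofReal (ρ y ^ r) ∂(gs E) ≤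
      2 * (ENNReal.ofReal (2 * (2 * Real.sqrt r * H) ^ r) * gs E Set.univ) := by
    have h2 : ∀ y : E, ENNReal.ofReal (ρ y ^ r) = ∫⁻ ω, ENNReal.ofReal (|inner ℝ (u ω) y| ^ r) ∂ν := by
      intro y
      rw [hρ y]
      exact ofReal_integral_eq_lintegral_ofReal (cont_integrable ν (by fun_prop))
        (Filter.Eventually.of_forall fun ω => by positivity)
    simp_rw [h2]
    have hmeas : Measurable (Function.uncurry fun (y : E) (ω : Ω) =>
        ENNReal.ofReal (|inner ℝ (u ω) y| ^ r)) := by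
      have : Continuous fun p : E × Ω => |inner ℝ (u p.2) p.1| ^ r := by fun_prop
      exact this.measurable.ennreal_ofReal
    rw [lintegral_lintegral_swap hmeas.aemeasurable]
    refine (lintegral_mono fun ω => gs_moment (u ω) H hH (huH ω) r hr).trans ?_
    rw [lintegral_const, mul_comm]
    gcongr
  have h3 := mul_meas_ge_le_lintegral (μ := gs E) (f := fun y => ENNReal.ofReal (ρ y ^ r))
    (by fun_prop) (ENNReal.ofReal (κ ^ r))
  have h4 : gs E {y | κ < ρ y} ≤ gs E {y | ENNReal.ofReal (κ ^ r) ≤ ENNReal.ofReal (ρ y ^ r)} := by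
    refine measure_mono fun y hy => ?_
    simp only [Set.mem_ofPred_eq] at hy ⊢
    apply ENNReal.ofReal_le_ofReal
    gcongr
  have h5 : ENNReal.ofReal (κ ^ r) * gs E {y | κ < ρ y} ≤
      ENNReal.ofReal (4 * (2 * Real.sqrt r * H) ^ r) * gs E Set.univ := by
    refine (mul_le_mul_right h4 _).trans (h3.trans (h1.trans (le_of_eq ?_)))
    rw [← mul_assoc, show (2 : ENNReal) = ENNReal.ofReal 2 by simp, ← ENNReal.ofReal_mul (by positivity)]
    congr 2
    ring
  have h6 : 8 * (2 * Real.sqrt r * H) ^ r ≤ κ ^ r := by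
    have : κ ^ r = 8 ^ r * (2 * Real.sqrt r * H) ^ r := by
      rw [← mul_pow]; congr 1; rw [hκ]; ring
    rw [this]
    have h8 : (8 : ℝ) ≤ 8 ^ r := by
      calc (8 : ℝ) = 8 ^ 1 := by norm_num
        _ ≤ 8 ^ r := pow_le_pow_right₀ (by norm_num) hr
    gcongr
  have h7 : (gs E).real {y | κ < ρ y} ≤ (gs E).real Set.univ / 2 := by
    have h8 := ENNReal.toReal_mono (ENNReal.mul_ne_top ENNReal.ofReal_ne_top gs_univ.2) h5
    rw [ENNReal.toReal_mul, ENNReal.toReal_mul, ENNReal.toReal_ofReal (by positivity),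
      ENNReal.toReal_ofReal (by positivity)] at h8
    change κ ^ r * (gs E).real {y | κ < ρ y} ≤ 4 * (2 * Real.sqrt r * H) ^ r * (gs E).real Set.univ at h8
    have h9 : 0 ≤ (gs E).real {y | κ < ρ y} := measureReal_nonneg
    have h10 := mul_le_mul_of_nonneg_right h6 h9
    have h11 : 0 < (2 * Real.sqrt r * H) ^ r := by positivity
    have h12 : (2 * Real.sqrt r * H) ^ r * (8 * (gs E).real {y | κ < ρ y}) ≤
       (2 * Real.sqrt r * H) ^ r * (4 * (gs E).real Set.univ) := by linarith
    have := le_of_mul_le_mul_left h12 h11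
    linarith
  have h8 : (gs E).real Set.univ ≤ (gs E).real {y | ρ y ≤ κ} + (gs E).real {y | κ < ρ y} := by
    have : (Set.univ : Set E) = {y | ρ y ≤ κ} ∪ {y | κ < ρ y} := by
      ext y; simp [le_or_gt]
    rw [this]
    exact measureReal_union_le _ _
  have h9 : (gs E).real Set.univ ≤ 2 * (gs E).real {y | ρ y ≤ κ} := by linarith
  have h10 := ENNReal.ofReal_le_ofReal h9
  rw [ENNReal.ofReal_mul (by norm_num)] at h10
  simpa [measureReal_def, ENNReal.ofReal_toReal, measure_ne_top] using h10

end LrNorm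

end


noncomputable section

section PhiLemmas

variable {Φ : ℝ → ℝ} {q θ A : ℝ}

lemma phi_pos (hpre : IsPhiPrefun Φ) (hdec : DecQ Φ q) {t : ℝ} (ht : 0 < t) : 0 < Φ t := by
  obtain ⟨T, hT1, hT2⟩ := ((hpre.tendsto_atTop.eventually_gt_atTop 0).and
    (Filter.eventually_gt_atTop t)).exists
  have h := hdec t T ht hT2
  have hT : 0 < T := ht.trans hT2
  have h1 : 0 < Φ T / T ^ q := div_pos hT1 (Real.rpow_pos_of_pos hT q)
  have h2 : 0 < t ^ q := Real.rpow_pos_of_pos ht q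
  have h3 := h1.trans_le h
  by_contra hc
  exact absurd h3 (not_lt.mpr (div_nonpos_of_nonpos_of_nonneg (not_lt.mp hc) h2.le))

lemma phi_dec (hpre : IsPhiPrefun Φ) (hdec : DecQ Φ q) {t c : ℝ} (ht : 0 ≤ t) (hc : 1 ≤ c) :
    Φ (c * t) ≤ c ^ q * Φ t := by
  rcases ht.eq_or_lt with rfl | ht
  · simp [hpre.map_zero]
  rcases hc.eq_or_lt with rfl | hc
  · simp
  have hc0 : 0 < c := by linarith
  have h := hdec t (c * t) ht (by nlinarith)
  rw [Real.mul_rpow hc0.le ht.le, div_le_div_iff₀ (by positivity) (by positivity)] at h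
  have h2 : 0 < t ^ q := Real.rpow_pos_of_pos ht q
  refine le_of_mul_le_mul_right ?_ h2
  linarith

lemma phi_inc (hpre : IsPhiPrefun Φ) (hA1 : 1 ≤ A) (hθ : 0 < θ) (hA : AIncP Φ θ A) {s t : ℝ} (hs : 0 ≤ s)
    (hst : s ≤ t) (ht : 0 < t) : Φ s ≤ A * (s / t) ^ θ * Φ t := by
  have hΦt := hpre.nonneg t ht.le
  rcases hs.eq_or_lt with rfl | hs
  · rw [hpre.map_zero]; positivity
  rcases hst.eq_or_lt with rfl | hst
  · rw [div_self hs.ne', Real.one_rpow]; nlinarith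
  have h := hA s t hs hst
  rw [div_le_iff₀ (by positivity)] at h
  rw [Real.div_rpow hs.le ht.le]
  calc Φ s ≤ _ := h
    _ = _ := by ring

lemma phi_lip (hpre : IsPhiPrefun Φ) (hq : 1 ≤ q) (hdec : DecQ Φ q) {a b : ℝ} (hb : 0 ≤ b)
    (hba : b ≤ a) (ha : 0 < a) : Φ a - Φ b ≤ q * ((a - b) / a) * Φ a := by
  have hΦa := hpre.nonneg a ha.le
  rcases hb.eq_or_lt with rfl | hb
  · rw [hpre.map_zero, sub_zero, sub_zero, div_self ha.ne']; nlinarith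
  have h1 : (b / a) ^ q * Φ a ≤ Φ b := by
    rcases hba.eq_or_lt with rfl | hba
    · rw [div_self hb.ne']; simp
    have h := hdec b a hb hba
    rw [div_le_div_iff₀ (by positivity) (by positivity)] at h
    rw [Real.div_rpow hb.le ha.le, div_mul_eq_mul_div, div_le_iff₀ (by positivity)]
    linarith
  have h2 := one_add_mul_self_le_rpow_one_add (s := -((a - b) / a)) (p := q)
    (by rw [neg_le_neg_iff, div_le_one ha]; linarith) hq
  have h3 : 1 + -((a - b) / a) = b / a := by field_simp; ring
  rw [h3] at h2
  nlinarith

lemma phi_cont (hpre : IsPhiPrefun Φ) (hq : 1 ≤ q) (hdec : DecQ Φ q) :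
    Continuous fun x : ℝ => Φ |x| := by
  rw [continuous_iff_continuousAt]
  intro t
  by_cases ht : t = 0
  · subst ht
    rw [Metric.continuousAt_iff]
    intro ε hε
    have h := Metric.tendsto_nhdsWithin_nhds.mp hpre.tendsto_zero ε hε
    obtain ⟨δ, hδ, h⟩ := h
    refine ⟨δ, hδ, fun {x} hx => ?_⟩
    simp only [abs_zero, hpre.map_zero]
    by_cases hx0 : x = 0
    · simpa [hx0, hpre.map_zero] using hε
    · refine h (abs_pos.mpr hx0) ?_
      simpa using hx
  · have ht0 : 0 < |t| := abs_pos.mpr ht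
    have key : ∀ᶠ x in nhds t, abs (Φ |x| - Φ |t|) ≤ q * Φ (2 * |t|) * (2 / |t|) * |(|x| - |t|)| := by
      have e1 : ∀ᶠ x in nhds t, |t| / 2 < |x| :=
        (continuous_abs.tendsto t).eventually_const_lt (by linarith)
      have e2 : ∀ᶠ x in nhds t, |x| < 2 * |t| :=
        (continuous_abs.tendsto t).eventually_lt_const (by linarith)
      filter_upwards [e1, e2] with x h1 h2
      have gen : ∀ a b : ℝ, |t| / 2 < a → a < 2 * |t| → 0 ≤ b → b ≤ a →
          |Φ a - Φ b| ≤ q * Φ (2 * |t|) * (2 / |t|) * |a - b| := by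
        intro a b ha ha2 hb hba
        have ha0 : 0 < a := by linarith
        rw [abs_of_nonneg (sub_nonneg.mpr (hpre.mono hb ha0.le hba)),
          abs_of_nonneg (sub_nonneg.mpr hba)]
        have h := phi_lip hpre hq hdec hb hba ha0
        have hm : Φ a ≤ Φ (2 * |t|) := hpre.mono ha0.le (by simp) ha2.le
        have h5 : 1 / a ≤ 2 / |t| := by
          rw [div_le_div_iff₀ ha0 ht0]; linarith
        calc _ ≤ _ := h
          _ = q * (1 / a) * (a - b) * Φ a := by ring
          _ ≤ q * (2 / |t|) * (a - b) * Φ (2 * |t|) := by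
            have := hpre.nonneg a ha0.le
            have : 0 ≤ a - b := by linarith
            gcongr
          _ = _ := by ring
      rcases le_total |t| |x| with h | h
      · exact gen _ _ h1 h2 ht0.le h
      · rw [abs_sub_comm, abs_sub_comm |x|]
        exact gen _ _ (by linarith) (by linarith) (abs_nonneg x) h
    unfold ContinuousAt
    rw [tendsto_iff_norm_sub_tendsto_zero]
    refine squeeze_zero' (Filter.Eventually.of_forall fun x => norm_nonneg _) key ?_
    have : Filter.Tendsto (fun x : ℝ => q * Φ (2 * |t|) * (2 / |t|) * |(|x| - |t|)|) (nhds t)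
        (nhds (q * Φ (2 * |t|) * (2 / |t|) * |(|t| - |t|)|)) :=
      Continuous.tendsto (by fun_prop) t
    simpa using this

lemma phi_sqdiff (hpre : IsPhiPrefun Φ) (hq : 1 ≤ q) (hdec : DecQ Φ q) (hA1 : 1 ≤ A) (hθ : 1 < θ)
    (hθ2 : θ ≤ 2) (hA : AIncP Φ θ A) {M : ℝ} (hM : 0 < M) {a b : ℝ} (ha : 0 ≤ a) (hb : 0 ≤ b)
    (haM : a ≤ M) (hbM : b ≤ M) :
    (Φ a - Φ b) ^ 2 ≤ q ^ 2 * A * Φ M / M ^ θ * |a - b| ^ θ * (Φ a + Φ b) := by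
  have gen : ∀ a b : ℝ, 0 ≤ b → b ≤ a → a ≤ M → 
      (Φ a - Φ b) ^ 2 ≤ q ^ 2 * A * Φ M / M ^ θ * |a - b| ^ θ * (Φ a + Φ b) := by
    intro a b hb hba haM
    have hΦM := hpre.nonneg M hM.le
    have hΦb := hpre.nonneg b hb
    rcases (hb.trans hba).eq_or_lt with h0 | ha0
    · have : b = 0 := by linarith
      subst this; rw [← h0]; simp [hpre.map_zero]
    have hΦa := hpre.nonneg a ha0.le
    have h1 := phi_lip hpre hq hdec hb hba ha0
    have h2 := phi_inc hpre hA1 (by linarith) hA ha0.le haM hM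
    have h3 : 0 ≤ Φ a - Φ b := sub_nonneg.mpr (hpre.mono hb ha0.le hba)
    set y := (a - b) / a with hy
    have hy0 : 0 ≤ y := div_nonneg (by linarith) ha0.le
    have hy1 : y ≤ 1 := by rw [hy, div_le_one ha0]; linarith
    have h4 : y ^ 2 ≤ y ^ θ := by
      rcases hy0.eq_or_lt with h | h
      · rw [← h, Real.zero_rpow (by linarith)]; norm_num
      · rw [← Real.rpow_two]
        exact Real.rpow_le_rpow_of_exponent_ge h hy1 hθ2
    rw [abs_of_nonneg (by linarith : 0 ≤ a - b)]
    calc (Φ a - Φ b) ^ 2 ≤ (q * y * Φ a) ^ 2 := by gcongr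
      _ = q ^ 2 * y ^ 2 * Φ a * Φ a := by ring
      _ ≤ q ^ 2 * y ^ θ * (A * (a / M) ^ θ * Φ M) * (Φ a + Φ b) := by
        gcongr; linarith
      _ = q ^ 2 * A * Φ M / M ^ θ * (a - b) ^ θ * (Φ a + Φ b) := by
        rw [hy, Real.div_rpow (by linarith) ha0.le, Real.div_rpow ha0.le hM.le]
        have : a ^ θ ≠ 0 := (Real.rpow_pos_of_pos ha0 θ).ne'
        field_simp
  rcases le_total b a with h | h
  · exact gen a b hb h haM
  · rw [abs_sub_comm, add_comm (Φ a), ← neg_sq, neg_sub]; exact gen b a ha h hbM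

lemma phi_rpow_le (hpre : IsPhiPrefun Φ) (hdec : DecQ Φ q) (hA1 : 1 ≤ A) (hθ : 0 < θ)
    (hA : AIncP Φ θ A) {t : ℝ} (ht : 0 ≤ t) : t ^ θ ≤ 1 + A / Φ 1 * Φ t := by
  have h1 : 0 < Φ 1 := phi_pos hpre hdec one_pos
  have h2 := hpre.nonneg t ht
  rcases le_total t 1 with h | h
  · have : t ^ θ ≤ 1 := Real.rpow_le_one ht h hθ.le
    have : 0 ≤ A / Φ 1 * Φ t := by positivity
    linarith
  · have ht0 : 0 < t := by linarith
    have h3 := phi_inc hpre hA1 hθ hA zero_le_one h ht0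
    rw [Real.div_rpow zero_le_one ht, Real.one_rpow] at h3
    have h4 : 0 < t ^ θ := by positivity
    have : t ^ θ ≤ A / Φ 1 * Φ t := by
      rw [div_mul_eq_mul_div, le_div_iff₀ h1]
      calc t ^ θ * Φ 1 ≤ t ^ θ * (A * (1 / t ^ θ) * Φ t) := by gcongr
        _ = A * Φ t := by field_simp
    linarith

variable {Ω : Type*} [TopologicalSpace Ω] [CompactSpace Ω] [MeasurableSpace Ω] [BorelSpace Ω]
  [SecondCountableTopology Ω] (μ : Measure Ω) [IsProbabilityMeasure μ]

lemma phi_int_theta (hpre : IsPhiPrefun Φ) (hq : 1 ≤ q) (hdec : DecQ Φ q) (hA1 : 1 ≤ A) (hθ : 0 < θ)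
    (hA : AIncP Φ θ A) {f : Ω → ℝ} (hf : Continuous f) (hB : ∫ ω, Φ |f ω| ∂μ ≤ 1) :
    ∫ ω, |f ω| ^ θ ∂μ ≤ 1 + A / Φ 1 := by
  have h1 : 0 < Φ 1 := phi_pos hpre hdec one_pos
  have hc : Continuous fun ω => Φ |f ω| := (phi_cont hpre hq hdec).comp hf
  calc ∫ ω, |f ω| ^ θ ∂μ ≤ ∫ ω, (1 + A / Φ 1 * Φ |f ω|) ∂μ := by
        apply integral_mono
        · exact cont_integrable μ (hf.abs.rpow_const fun _ => Or.inr hθ.le)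
        · exact cont_integrable μ (continuous_const.add (continuous_const.mul hc))
        · intro ω; exact phi_rpow_le hpre hdec hA1 hθ hA (abs_nonneg _)
    _ = 1 + A / Φ 1 * ∫ ω, Φ |f ω| ∂μ := by
        rw [integral_add (integrable_const _) ((cont_integrable μ hc).const_mul _),
          integral_const_mul]; simp
    _ ≤ 1 + A / Φ 1 * 1 := by gcongr
    _ = _ := by ring

lemma phi_sup (hpre : IsPhiPrefun Φ) (hq : 1 ≤ q) (hdec : DecQ Φ q) (hA1 : 1 ≤ A) (hθ : 1 < θ)
    (hθ2 : θ ≤ 2) (hA : AIncP Φ θ A) {H : ℝ} (hH : 1 ≤ H) {f : Ω → ℝ} (hf : Continuous f)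
    (hsup : ∀ ω, |f ω| ≤ H * Real.sqrt (∫ y, (f y) ^ 2 ∂μ))
    (hB : ∫ ω, Φ |f ω| ∂μ ≤ 1) (ω : Ω) :
    |f ω| ≤ (1 + A / Φ 1) * H ^ (2 / θ) := by
  have hΦ1 : 0 < Φ 1 := phi_pos hpre hdec one_pos
  obtain ⟨ω0, -, h0⟩ := isCompact_univ.exists_isMaxOn ⟨ω, Set.mem_univ ω⟩ hf.abs.continuousOn
  have h0 : ∀ y, |f y| ≤ |f ω0| := fun y => h0 (Set.mem_univ y)
  refine (h0 ω).trans ?_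
  set S := |f ω0| with hS
  set K := 1 + A / Φ 1 with hK
  have hK1 : 1 ≤ K := by rw [hK]; have : 0 ≤ A / Φ 1 := by positivity
                         linarith
  have hHp : 0 < H ^ (2 / θ) := Real.rpow_pos_of_pos (by linarith) _
  rcases (abs_nonneg (f ω0)).eq_or_lt with hS0 | hS0
  · rw [hS, ← hS0]; positivity
  have hI := phi_int_theta μ hpre hq hdec hA1 (by linarith) hA hf hB
  have hnonneg0 : 0 ≤ ∫ y, (f y) ^ 2 ∂μ := integral_nonneg fun y => by positivity
  have h1 : S ^ 2 ≤ H ^ 2 * ∫ y, (f y) ^ 2 ∂μ := by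
    calc S ^ 2 ≤ (H * Real.sqrt (∫ y, (f y) ^ 2 ∂μ)) ^ 2 := by gcongr; exact hsup ω0
      _ = _ := by rw [mul_pow, Real.sq_sqrt hnonneg0]
  have hpt : ∀ y, (f y) ^ 2 ≤ S ^ (2 - θ) * |f y| ^ θ := by
    intro y
    rcases (abs_nonneg (f y)).eq_or_lt with hy | hy
    · have : f y = 0 := abs_eq_zero.mp hy.symm
      rw [this]; simp; positivity
    · calc (f y) ^ 2 = |f y| ^ (2 : ℝ) := by rw [Real.rpow_two, sq_abs]
        _ = |f y| ^ (2 - θ) * |f y| ^ θ := by rw [← Real.rpow_add hy]; congr 1; ring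
        _ ≤ S ^ (2 - θ) * |f y| ^ θ := by
          gcongr
          exact h0 y
  have h2 : ∫ y, (f y) ^ 2 ∂μ ≤ S ^ (2 - θ) * K := by
    calc ∫ y, (f y) ^ 2 ∂μ ≤ ∫ y, S ^ (2 - θ) * |f y| ^ θ ∂μ := by
          apply integral_mono
          · exact cont_integrable μ (by fun_prop)
          · exact (cont_integrable μ (hf.abs.rpow_const fun _ => Or.inr (by linarith))).const_mul _
          · exact hpt
      _ = S ^ (2 - θ) * ∫ y, |f y| ^ θ ∂μ := integral_const_mul _ _
      _ ≤ _ := by gcongr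
  have h3 : S ^ θ ≤ H ^ 2 * K := by
    have e : S ^ 2 = S ^ (2 - θ) * S ^ θ := by
      rw [← Real.rpow_two, ← Real.rpow_add hS0]; congr 1; ring
    have hp : 0 < S ^ (2 - θ) := Real.rpow_pos_of_pos hS0 _
    refine le_of_mul_le_mul_left ?_ hp
    rw [← e]
    calc S ^ 2 ≤ _ := h1
      _ ≤ H ^ 2 * (S ^ (2 - θ) * K) := by gcongr
      _ = _ := by ring
  have h4 : S ^ θ ≤ (K * H ^ (2 / θ)) ^ θ := by
    rw [Real.mul_rpow (by linarith) hHp.le, ← Real.rpow_mul (by linarith),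
      div_mul_cancel₀ _ (by linarith : θ ≠ 0), Real.rpow_two]
    have : K ≤ K ^ θ := by
      calc K = K ^ (1 : ℝ) := (Real.rpow_one K).symm
        _ ≤ K ^ θ := Real.rpow_le_rpow_of_exponent_le hK1 hθ.le
    nlinarith [sq_nonneg H]
  exact (Real.rpow_le_rpow_iff hS0.le (by positivity) (by linarith)).mp h4

end PhiLemmas

end


noncomputable section

section Symm

variable {Ω : Type*} [TopologicalSpace Ω] [CompactSpace Ω] [MeasurableSpace Ω] [BorelSpace Ω]
  [SecondCountableTopology Ω] (μ : Measure Ω) [IsProbabilityMeasure μ]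

lemma symm_ineq {ι : Type*} (F : Finset ι) (hF : F.Nonempty) (φ : ι → Ω → ℝ)
    (hφ : ∀ f, Continuous (φ f)) (m : ℕ) :
    ∫ x, F.sup' hF (fun f => |∑ j, φ f (x j) - m * ∫ ω, φ f ω ∂μ|) ∂(Measure.pi fun _ : Fin m => μ) ≤
    ∫ x, 2 * ravg (fun e => F.sup' hF (fun f => |rdot e (fun j => φ f (x j))|))
      ∂(Measure.pi fun _ : Fin m => μ) := by
  set P := Measure.pi fun _ : Fin m => μ with hP
  have hcs : ∀ {Y : Type _} [TopologicalSpace Y] (g : ι → Y → ℝ), (∀ f, Continuous (g f)) →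
      Continuous fun x => F.sup' hF (fun f => g f x) := by
    intro Y _ g hg
    exact Continuous.finset_sup'_apply hF (fun f _ => hg f)
  set S : (Fin m → Ω) × (Fin m → Ω) → ℝ := fun p =>
    F.sup' hF (fun f => |∑ j, (φ f (p.1 j) - φ f (p.2 j))|) with hS
  have hSc : Continuous S := hcs _ fun f => by fun_prop
  set T : (Fin m → Bool) → (Fin m → Ω) → ℝ := fun e x =>
    F.sup' hF (fun f => |rdot e (fun j => φ f (x j))|) with hT
  have hTc : ∀ e, Continuous (T e) := fun e => hcs _ fun f => by unfold rdot; fun_prop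
  -- Step 1
  have step1 : ∫ x, F.sup' hF (fun f => |∑ j, φ f (x j) - m * ∫ ω, φ f ω ∂μ|) ∂P ≤
      ∫ p, S p ∂(P.prod P) := by
    rw [integral_prod _ (cont_integrable _ hSc)]
    apply integral_mono
    · exact cont_integrable _ (hcs _ fun f => by fun_prop)
    · exact (cont_integrable (P.prod P) hSc).integral_prod_left
    · intro x
      refine Finset.sup'_le hF _ fun f hf => ?_
      have h1 : ∀ j, ∫ y : Fin m → Ω, φ f (y j) ∂P = ∫ ω, φ f ω ∂μ := fun j => by
        have := (measurePreserving_eval (fun _ : Fin m => μ) j)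
        rw [← this.map_eq, integral_map this.measurable.aemeasurable
          (hφ f).aestronglyMeasurable]
      have h2 : ∫ y : Fin m → Ω, ∑ j, (φ f (x j) - φ f (y j)) ∂P
          = ∑ j, φ f (x j) - m * ∫ ω, φ f ω ∂μ := by
        rw [integral_finsetSum _ (fun j _ => cont_integrable _ (by fun_prop))]
        have h3 : ∀ j, ∫ y : Fin m → Ω, (φ f (x j) - φ f (y j)) ∂P =
            φ f (x j) - ∫ ω, φ f ω ∂μ := fun j => by
          rw [integral_sub (integrable_const _) (cont_integrable _ (by fun_prop)), h1]; simp
        simp [h3]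
      rw [← h2]
      refine (abs_integral_le_integral_abs).trans ?_
      apply integral_mono
      · exact cont_integrable _ (by fun_prop)
      · exact cont_integrable _ (hSc.comp (by fun_prop : Continuous fun y => (x, y)))
      · intro y
        exact Finset.le_sup' (f := fun f => |∑ j, (φ f (x j) - φ f (y j))|) hf
  -- Step 2
  have mpA := measurePreserving_arrowProdEquivProdArrow Ω Ω (Fin m) (fun _ => μ) (fun _ => μ)
  have step2 : ∀ e, ∫ p, S p ∂(P.prod P) ≤ 2 * ∫ x, T e x ∂P := by
    intro e
    set W : (Fin m → Ω) × (Fin m → Ω) → ℝ := fun p =>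
      F.sup' hF (fun f => |rdot e (fun j => φ f (p.1 j) - φ f (p.2 j))|) with hW
    have hWc : Continuous W := hcs _ fun f => by unfold rdot; fun_prop
    have mpS : MeasurePreserving
        (fun (w : Fin m → Ω × Ω) j => (if e j then (id : Ω × Ω → Ω × Ω) else Prod.swap) (w j))
        (Measure.pi fun _ => μ.prod μ) (Measure.pi fun _ => μ.prod μ) := by
      apply measurePreserving_pi
      intro j
      split_ifs
      · exact MeasurePreserving.id _
      · exact Measure.measurePreserving_swap
    have e1 : ∫ p, S p ∂(P.prod P) = ∫ p, W p ∂(P.prod P) := by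
      rw [← mpA.map_eq]
      rw [integral_map_equiv, integral_map_equiv]
      rw [← mpS.map_eq, integral_map mpS.measurable.aemeasurable]
      · rw [mpS.map_eq]
        congr 1
        ext w
        simp only [hS, hW, MeasurableEquiv.arrowProdEquivProdArrow, MeasurableEquiv.coe_mk,
          Equiv.arrowProdEquivProdArrow, Equiv.coe_fn_mk, rdot]
        congr 1
        ext f
        congr 2
        ext j
        cases e j <;> simp [rsgn]
      · rw [mpS.map_eq]
        have : Continuous fun w : Fin m → Ω × Ω => S (fun j => (w j).1, fun j => (w j).2) :=
          hSc.comp (by fun_prop)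
        exact this.aestronglyMeasurable
    rw [e1]
    have e2 : ∀ p, W p ≤ T e p.1 + T e p.2 := by
      intro p
      refine Finset.sup'_le hF _ fun f hf => ?_
      have : rdot e (fun j => φ f (p.1 j) - φ f (p.2 j)) =
        rdot e (fun j => φ f (p.1 j)) - rdot e (fun j => φ f (p.2 j)) := by
        simp [rdot, mul_sub, Finset.sum_sub_distrib]
      rw [this]
      refine (abs_sub _ _).trans (add_le_add ?_ ?_)
      · exact Finset.le_sup' (f := fun f => |rdot e (fun j => φ f (p.1 j))|) hf
      · exact Finset.le_sup' (f := fun f => |rdot e (fun j => φ f (p.2 j))|) hf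
    calc ∫ p, W p ∂(P.prod P) ≤ ∫ p, (T e p.1 + T e p.2) ∂(P.prod P) :=
          integral_mono (cont_integrable _ hWc)
            (cont_integrable _ (((hTc e).comp continuous_fst).add ((hTc e).comp continuous_snd))) e2
      _ = ∫ p, T e p.1 ∂(P.prod P) + ∫ p, T e p.2 ∂(P.prod P) :=
          integral_add (cont_integrable _ ((hTc e).comp continuous_fst))
            (cont_integrable _ ((hTc e).comp continuous_snd))
      _ = 2 * ∫ x, T e x ∂P := by
          rw [integral_fun_fst, integral_fun_snd]; simp; ring
  refine step1.trans ?_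
  have e3 : ∫ x, 2 * ravg (fun e => T e x) ∂P = 2 * ravg (fun e => ∫ x, T e x ∂P) := by
    unfold ravg
    rw [integral_const_mul, integral_div, integral_finsetSum _ (fun e _ => cont_integrable _ (hTc e))]
  change _ ≤ ∫ x, 2 * ravg (fun e => T e x) ∂P
  rw [e3, ← ravg_mul]
  calc ∫ p, S p ∂(P.prod P) = ravg (fun _ : Fin m → Bool => ∫ p, S p ∂(P.prod P)) := (ravg_const _).symm
    _ ≤ _ := ravg_mono step2

end Symm

end


noncomputable section

section Pure

lemma rpow_split {h t θ : ℝ} (hh : 0 ≤ h) (ht : 0 < t) (hθ : 0 < θ) {r : ℕ} (hr : θ ≤ r) :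
    h ^ θ ≤ t ^ θ * (1 + (h / t) ^ r) := by
  have e : h ^ θ = t ^ θ * (h / t) ^ θ := by
    rw [Real.div_rpow hh ht.le]; field_simp
  rw [e]
  gcongr
  have hy : 0 ≤ h / t := by positivity
  rcases le_total (h / t) 1 with h1 | h1
  · have := Real.rpow_le_one hy h1 hθ.le
    have : 0 ≤ (h / t) ^ r := by positivity
    linarith
  · have := Real.rpow_le_rpow_of_exponent_le h1 hr
    rw [Real.rpow_natCast] at this
    linarith

lemma two_rpow_le_four {θ : ℝ} (hθ2 : θ ≤ 2) : (2 : ℝ) ^ θ ≤ 4 := by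
  calc (2 : ℝ) ^ θ ≤ 2 ^ (2 : ℝ) := Real.rpow_le_rpow_of_exponent_le (by norm_num) hθ2
    _ = 4 := by rw [Real.rpow_two]; norm_num

lemma sum_sq_bound {Φ : ℝ → ℝ} {q θ A : ℝ} (hpre : IsPhiPrefun Φ) (hq : 1 ≤ q) (hdec : DecQ Φ q)
    (hA1 : 1 ≤ A) (hθ : 1 < θ)
    (hθ2 : θ ≤ 2) (hA : AIncP Φ θ A) {M : ℝ} (hM : 0 < M) {m : ℕ} (a b h : Fin m → ℝ)
    (ha : ∀ j, 0 ≤ a j) (hb : ∀ j, 0 ≤ b j) (haM : ∀ j, a j ≤ M) (hbM : ∀ j, b j ≤ M)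
    (hh : ∀ j, |a j - b j| ≤ h j) {r : ℕ} (hr : 2 ≤ r) {t R L : ℝ} (ht : 0 < t) (hR : 1 ≤ R)
    (hL0 : 0 ≤ L) (hL : Φ M ≤ L * 2 ^ r) (hsum : ∑ j, h j ^ r ≤ m * t ^ r)
    (haR : ∑ j, Φ (a j) ≤ m * R) (hbR : ∑ j, Φ (b j) ≤ m * R) :
    ∑ j, (Φ (a j) - Φ (b j)) ^ 2 ≤ 8 * (q ^ 2 * A * Φ M / M ^ θ) * m * R * (1 + L) * t ^ θ := by
  have hΦM := hpre.nonneg M hM.le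
  set G := q ^ 2 * A * Φ M / M ^ θ with hG
  have hG0 : 0 ≤ G := by positivity
  have hr' : θ ≤ r := hθ2.trans (by exact_mod_cast hr)
  have h0 : ∀ j, 0 ≤ h j := fun j => (abs_nonneg _).trans (hh j)
  have h1 : ∀ j, (Φ (a j) - Φ (b j)) ^ 2 ≤
      G * (2 * t) ^ θ * ((Φ (a j) + Φ (b j)) + 2 * Φ M / (2 * t) ^ r * h j ^ r) := by
    intro j
    have e0 := hpre.nonneg _ (ha j)
    have e1 := hpre.nonneg _ (hb j)
    have e2 := hpre.mono (ha j) hM.le (haM j)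
    have e3 := hpre.mono (hb j) hM.le (hbM j)
    have := h0 j
    calc (Φ (a j) - Φ (b j)) ^ 2 ≤ G * |a j - b j| ^ θ * (Φ (a j) + Φ (b j)) :=
          phi_sqdiff hpre hq hdec hA1 hθ hθ2 hA hM (ha j) (hb j) (haM j) (hbM j)
      _ ≤ G * (h j) ^ θ * (Φ (a j) + Φ (b j)) := by gcongr; exact hh j
      _ ≤ G * ((2 * t) ^ θ * (1 + (h j / (2 * t)) ^ r)) * (Φ (a j) + Φ (b j)) := by
          gcongr; exact rpow_split (h0 j) (by positivity) (by linarith) hr'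
      _ = G * (2 * t) ^ θ * ((Φ (a j) + Φ (b j)) + (Φ (a j) + Φ (b j)) * (h j / (2 * t)) ^ r) := by ring
      _ ≤ G * (2 * t) ^ θ * ((Φ (a j) + Φ (b j)) + (2 * Φ M) * (h j / (2 * t)) ^ r) := by
          gcongr; linarith
      _ = _ := by rw [div_pow]; ring
  have h2 : 2 * Φ M / (2 * t) ^ r * (m * t ^ r) ≤ 2 * L * m := by
    rw [mul_pow]
    have : 2 * Φ M / (2 ^ r * t ^ r) * (m * t ^ r) = 2 * m * (Φ M / 2 ^ r) := by field_simp
    rw [this]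
    have : Φ M / 2 ^ r ≤ L := by rw [div_le_iff₀ (by positivity)]; exact hL
    have : 2 * m * (Φ M / 2 ^ r) ≤ 2 * m * L := by gcongr
    linarith
  calc ∑ j, (Φ (a j) - Φ (b j)) ^ 2 ≤ ∑ j, G * (2 * t) ^ θ * ((Φ (a j) + Φ (b j)) + 2 * Φ M / (2 * t) ^ r * h j ^ r) :=
        Finset.sum_le_sum fun j _ => h1 j
    _ = G * (2 * t) ^ θ * ((∑ j, Φ (a j) + ∑ j, Φ (b j)) + 2 * Φ M / (2 * t) ^ r * ∑ j, h j ^ r) := by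
        rw [← Finset.mul_sum, Finset.sum_add_distrib, Finset.sum_add_distrib, Finset.mul_sum]
    _ ≤ G * (2 * t) ^ θ * ((m * R + m * R) + 2 * Φ M / (2 * t) ^ r * (m * t ^ r)) := by gcongr
    _ ≤ G * (2 * t) ^ θ * ((m * R + m * R) + 2 * L * m) := by gcongr
    _ ≤ G * (4 * t ^ θ) * (2 * m * (R * (1 + L))) := by
        rw [Real.mul_rpow (by norm_num) ht.le]
        have := two_rpow_le_four hθ2
        gcongr
        have : (0 : ℝ) ≤ m := by positivity
        have : 0 ≤ m * (L * (R - 1)) := by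
          apply mul_nonneg this (mul_nonneg hL0 (by linarith))
        linarith
    _ = _ := by ring

end Pure

section Rho

variable {E : Type*} [NormedAddCommGroup E] [InnerProductSpace ℝ E] [FiniteDimensional ℝ E]
  [MeasurableSpace E] [BorelSpace E]
variable {Ω : Type*} [TopologicalSpace Ω] [CompactSpace Ω] [MeasurableSpace Ω] [BorelSpace Ω]
  [SecondCountableTopology Ω] (μ : Measure Ω) [IsProbabilityMeasure μ]

lemma exists_rho (u : Ω → E) (hu : Continuous u) (H : ℝ) (hH : 0 < H) (huH : ∀ ω, ‖u ω‖ ≤ H)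
    (r : ℕ) (hr : 1 ≤ r) {m : ℕ} (hm : 1 ≤ m) (x : Fin m → Ω) :
    ∃ ρ : Seminorm ℝ E, Continuous ρ ∧
      (∀ z, ρ z ^ r = ∫ ω, |inner ℝ (u ω) z| ^ r ∂μ + (∑ j, |inner ℝ (u (x j)) z| ^ r) / m) ∧
      gs E Set.univ ≤ 2 * gs E {y | ρ y ≤ 16 * Real.sqrt r * H} := by
  set ν : Measure Ω := μ + (m : ENNReal)⁻¹ • ∑ j, Measure.dirac (x j) with hν
  have hm0 : (m : ENNReal) ≠ 0 := by exact_mod_cast (by omega : m ≠ 0)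
  have hmass : ν Set.univ = 2 := by
    simp only [hν, Measure.add_apply, measure_univ, Measure.smul_apply, Measure.coe_finset_sum,
      Finset.sum_apply, Finset.sum_const, Finset.card_univ, Fintype.card_fin, smul_eq_mul,
      nsmul_eq_mul, mul_one]
    rw [ENNReal.inv_mul_cancel hm0 (by simp)]
    norm_num
  have : IsFiniteMeasure ν := ⟨by rw [hmass]; simp⟩
  obtain ⟨ρ, hρc, hρ⟩ := exists_lr_seminorm ν u hu r hr
  refine ⟨ρ, hρc, fun z => ?_, gauss_half ν hmass.le u hu H hH huH r hr ρ hρc hρ⟩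
  rw [hρ z]
  have hc : Continuous fun ω => |inner ℝ (u ω) z| ^ r := by fun_prop
  have hi := cont_integrable ν hc
  have hi1 := cont_integrable μ hc
  rw [hν, integral_add_measure hi1, integral_smul_measure, integral_finsetSum_measure]
  · congr 1
    simp only [integral_dirac' _ _ hc.stronglyMeasurable]
    simp [div_eq_inv_mul]
  · intro j _; exact cont_integrable _ hc
  · exact hi.mono_measure (by rw [hν]; exact Measure.le_add_left le_rfl)

end Rho

end


noncomputable section

section FixedX

variable {E : Type*} [NormedAddCommGroup E] [InnerProductSpace ℝ E] [FiniteDimensional ℝ E]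
  [MeasurableSpace E] [BorelSpace E]
variable {Ω : Type*} [TopologicalSpace Ω] [CompactSpace Ω] [MeasurableSpace Ω] [BorelSpace Ω]
  [SecondCountableTopology Ω] (μ : Measure Ω) [IsProbabilityMeasure μ]

/-- the `L_2` norm bound for differences -/
lemma l2_bound {f g : Ω → ℝ} (hf : Continuous f) (hg : Continuous g) {θ K t H : ℝ} (hθ : 1 < θ)
    (hθ2 : θ ≤ 2) (hK : 1 ≤ K) (hfK : ∫ ω, |f ω| ^ θ ∂μ ≤ K) (hgK : ∫ ω, |g ω| ^ θ ∂μ ≤ K)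
    {r : ℕ} (hr : 2 ≤ r) (ht : 0 < t) (htH : t ^ θ ≤ 16 * K ^ 2 * H ^ 2) (hrH : H ^ 2 ≤ 2 ^ r)
    (hh : ∫ ω, |f ω - g ω| ^ r ∂μ ≤ t ^ r) :
    ∫ ω, (f ω - g ω) ^ 2 ∂μ ≤ 80 * K ^ 2 * t ^ (2 - θ) := by
  have hθ0 : 0 ≤ θ := by linarith
  have hpc : ∀ {k : Ω → ℝ}, Continuous k → Continuous fun ω => |k ω| ^ θ := fun hk =>
    hk.abs.rpow_const fun _ => Or.inr hθ0
  have h1 : ∫ ω, |f ω - g ω| ^ θ ∂μ ≤ 8 * K := by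
    have hp : ∀ ω, |f ω - g ω| ^ θ ≤ 4 * |f ω| ^ θ + 4 * |g ω| ^ θ := by
      intro ω
      have e1 : |f ω - g ω| ≤ 2 * max |f ω| |g ω| := by
        have := abs_sub (f ω) (g ω)
        linarith [le_max_left |f ω| |g ω|, le_max_right |f ω| |g ω|]
      have e2 : (max |f ω| |g ω|) ^ θ ≤ |f ω| ^ θ + |g ω| ^ θ := by
        have p1 : 0 ≤ |f ω| ^ θ := by positivity
        have p2 : 0 ≤ |g ω| ^ θ := by positivity
        rcases max_choice |f ω| |g ω| with h | h <;> rw [h] <;> linarith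
      calc |f ω - g ω| ^ θ ≤ (2 * max |f ω| |g ω|) ^ θ := by gcongr
        _ = 2 ^ θ * (max |f ω| |g ω|) ^ θ := Real.mul_rpow (by norm_num) (by positivity)
        _ ≤ 4 * (|f ω| ^ θ + |g ω| ^ θ) := by
          have := two_rpow_le_four hθ2
          gcongr
        _ = _ := by ring
    calc ∫ ω, |f ω - g ω| ^ θ ∂μ ≤ ∫ ω, (4 * |f ω| ^ θ + 4 * |g ω| ^ θ) ∂μ := by
          apply integral_mono (cont_integrable μ (hpc (hf.sub hg))) _ hp
          exact ((cont_integrable μ (hpc hf)).const_mul _).add ((cont_integrable μ (hpc hg)).const_mul _)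
      _ = 4 * ∫ ω, |f ω| ^ θ ∂μ + 4 * ∫ ω, |g ω| ^ θ ∂μ := by
          rw [integral_add ((cont_integrable μ (hpc hf)).const_mul _)
            ((cont_integrable μ (hpc hg)).const_mul _), integral_const_mul, integral_const_mul]
      _ ≤ 8 * K := by linarith
  have h2 : ∀ ω, (f ω - g ω) ^ 2 ≤ (2 * t) ^ (2 - θ) * |f ω - g ω| ^ θ +
      (2 * t) ^ 2 / (2 * t) ^ r * |f ω - g ω| ^ r := by
    intro ω
    set h := |f ω - g ω| with hh
    have h0 : 0 ≤ h := abs_nonneg _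
    have hsq : (f ω - g ω) ^ 2 = h ^ 2 := (sq_abs _).symm
    rw [hsq]
    have t0 : 0 < 2 * t := by positivity
    rcases h0.eq_or_lt with hz | hz
    · rw [← hz]
      simp only [ne_eq, OfNat.ofNat_ne_zero, not_false_eq_true, zero_pow]
      positivity
    rcases le_total h (2 * t) with hc | hc
    · have e : h ^ 2 = h ^ (2 - θ) * h ^ θ := by
        rw [← Real.rpow_two, ← Real.rpow_add hz]; congr 1; ring
      have : h ^ (2 - θ) * h ^ θ ≤ (2 * t) ^ (2 - θ) * h ^ θ := by
        gcongr
      have : 0 ≤ (2 * t) ^ 2 / (2 * t) ^ r * h ^ r := by positivity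
      linarith
    · have e : h ^ 2 ≤ (2 * t) ^ 2 / (2 * t) ^ r * h ^ r := by
        have hy : 1 ≤ h / (2 * t) := by rw [one_le_div t0]; exact hc
        have := pow_le_pow_right₀ hy hr
        rw [div_pow, div_pow, div_le_div_iff₀ (by positivity) (by positivity)] at this
        rw [div_mul_eq_mul_div, le_div_iff₀ (by positivity)]
        linarith
      have : 0 ≤ (2 * t) ^ (2 - θ) * h ^ θ := by positivity
      linarith
  have hc1 : Continuous fun ω => |f ω - g ω| ^ θ := hpc (hf.sub hg)
  have hc2 : Continuous fun ω => |f ω - g ω| ^ r := by fun_prop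
  calc ∫ ω, (f ω - g ω) ^ 2 ∂μ ≤ ∫ ω, ((2 * t) ^ (2 - θ) * |f ω - g ω| ^ θ +
      (2 * t) ^ 2 / (2 * t) ^ r * |f ω - g ω| ^ r) ∂μ := by
        apply integral_mono (cont_integrable μ (by fun_prop)) _ h2
        exact ((cont_integrable μ hc1).const_mul _).add ((cont_integrable μ hc2).const_mul _)
    _ = (2 * t) ^ (2 - θ) * ∫ ω, |f ω - g ω| ^ θ ∂μ +
      (2 * t) ^ 2 / (2 * t) ^ r * ∫ ω, |f ω - g ω| ^ r ∂μ := by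
        rw [integral_add ((cont_integrable μ hc1).const_mul _)
            ((cont_integrable μ hc2).const_mul _), integral_const_mul, integral_const_mul]
    _ ≤ (2 * t) ^ (2 - θ) * (8 * K) + (2 * t) ^ 2 / (2 * t) ^ r * t ^ r := by gcongr
    _ ≤ (2 * t ^ (2 - θ)) * (8 * K) + 64 * K ^ 2 * t ^ (2 - θ) := by
        have e1 : (2 * t) ^ (2 - θ) ≤ 2 * t ^ (2 - θ) := by
          rw [Real.mul_rpow (by norm_num) ht.le]
          gcongr
          calc (2 : ℝ) ^ (2 - θ) ≤ 2 ^ (1 : ℝ) := Real.rpow_le_rpow_of_exponent_le (by norm_num) (by linarith)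
            _ = 2 := Real.rpow_one 2
        have e2 : (2 * t) ^ 2 / (2 * t) ^ r * t ^ r ≤ 64 * K ^ 2 * t ^ (2 - θ) := by
          have : (2 * t) ^ 2 / (2 * t) ^ r * t ^ r = 4 * t ^ 2 / 2 ^ r := by
            rw [mul_pow 2 t r]; field_simp; ring
          rw [this, div_le_iff₀ (by positivity)]
          have e : t ^ 2 = t ^ (2 - θ) * t ^ θ := by
            rw [← Real.rpow_two, ← Real.rpow_add ht]; congr 1; ring
          rw [e]
          calc 4 * (t ^ (2 - θ) * t ^ θ) ≤ 4 * (t ^ (2 - θ) * (16 * K ^ 2 * H ^ 2)) := by gcongr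
            _ ≤ 4 * (t ^ (2 - θ) * (16 * K ^ 2 * 2 ^ r)) := by gcongr
            _ = _ := by ring
        gcongr
    _ ≤ 80 * K ^ 2 * t ^ (2 - θ) := by
        have : 0 < t ^ (2 - θ) := by positivity
        have hKK : K ≤ K ^ 2 := by nlinarith
        nlinarith

set_option maxHeartbeats 2000000 in
lemma fixed_x {Φ : ℝ → ℝ} {q θ A : ℝ} (hpre : IsPhiPrefun Φ) (hq : 1 ≤ q) (hdec : DecQ Φ q)
    (hA1 : 1 ≤ A) (hθ : 1 < θ) (hθ2 : θ ≤ 2) (hA : AIncP Φ θ A)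
    (u : Ω → E) (hu : Continuous u) (H : ℝ) (hH : 1 ≤ H) (huH : ∀ ω, ‖u ω‖ ≤ H)
    (hiso : ∀ z, ∫ ω, (inner ℝ (u ω) z) ^ 2 ∂μ = ‖z‖ ^ 2)
    {r : ℕ} (hr : 2 ≤ r) {K M L R : ℝ} (hKdef : K = 1 + A / Φ 1) (hMdef : M = K * H ^ (2 / θ))
    (hrH : H ^ 2 ≤ 2 ^ r) (hL0 : 0 ≤ L) (hL : Φ M ≤ L * 2 ^ r) (hR : 1 ≤ R)
    {m : ℕ} (hm : 1 ≤ m) (x : Fin m → Ω) (F : Finset E) (hF : F.Nonempty) (h0 : (0 : E) ∈ F)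
    (hFB : ∀ z ∈ F, ∫ ω, Φ |inner ℝ (u ω) z| ∂μ ≤ 1)
    (hFR : ∀ z ∈ F, ∑ j, Φ |inner ℝ (u (x j)) z| ≤ m * R) :
    ravg (fun e => F.sup' hF (fun z => |rdot e (fun j => Φ |inner ℝ (u (x j)) z|)|)) ≤
      Real.sqrt (50000000 * q ^ 2 * A * (1 + L) * K * r * (2 * Nat.clog 2 (Module.finrank ℝ E) + 18) ^ 2
        * Φ M * (m * R)) := by
  have hΦ1 : 0 < Φ 1 := phi_pos hpre hdec one_pos
  have hK1 : 1 ≤ K := by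
    have : 0 ≤ A / Φ 1 := by positivity
    linarith
  have hHp : 1 ≤ H ^ (2 / θ) := Real.one_le_rpow hH (by positivity)
  have hM1 : 1 ≤ M := by rw [hMdef]; nlinarith
  have hM0 : 0 < M := by linarith
  have hΦM : 0 < Φ M := phi_pos hpre hdec hM0
  have hH0 : 0 < H := by linarith
  have hm0 : (0 : ℝ) < m := by exact_mod_cast hm
  have hr0 : (0 : ℝ) < r := by exact_mod_cast (by omega : 0 < r)
  have hr1 : (1 : ℝ) ≤ r := by exact_mod_cast (by omega : 1 ≤ r)
  have hcf : ∀ z : E, Continuous fun ω => inner ℝ (u ω) z := fun z => by fun_prop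
  have hsup : ∀ z ∈ F, ∀ ω, |inner ℝ (u ω) z| ≤ M := by
    intro z hz ω
    rw [hMdef, hKdef]
    refine phi_sup μ hpre hq hdec hA1 hθ hθ2 hA hH (hcf z) (fun ω => ?_) (hFB z hz) ω
    rw [hiso, Real.sqrt_sq (norm_nonneg z)]
    exact (abs_real_inner_le_norm _ _).trans (by gcongr; exact huH ω)
  have hthe : ∀ z ∈ F, ∫ ω, |inner ℝ (u ω) z| ^ θ ∂μ ≤ K := fun z hz => by
    rw [hKdef]; exact phi_int_theta μ hpre hq hdec hA1 (by linarith) hA (hcf z) (hFB z hz)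
  obtain ⟨ρ, hρc, hρ, hgs⟩ := exists_rho μ u hu H hH0 huH r (by omega) hm x
  have hρ0 : ∀ z, 0 ≤ ρ z := fun z => apply_nonneg ρ z
  -- consequences of `ρ z ≤ t`
  have hnonneg0 : ∀ z, 0 ≤ ∫ ω, |inner ℝ (u ω) z| ^ r ∂μ := fun z => integral_nonneg fun ω => by positivity
  have hsum0 : ∀ z, 0 ≤ (∑ j, |inner ℝ (u (x j)) z| ^ r) / (m : ℝ) := fun z => by positivity
  have hρint : ∀ z t, ρ z ≤ t → ∫ ω, |inner ℝ (u ω) z| ^ r ∂μ ≤ t ^ r := fun z t h => by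
    have h1 : ρ z ^ r ≤ t ^ r := pow_le_pow_left₀ (hρ0 z) h r
    rw [hρ z] at h1
    linarith [hsum0 z]
  have hρsum : ∀ z t, ρ z ≤ t → ∑ j, |inner ℝ (u (x j)) z| ^ r ≤ m * t ^ r := fun z t h => by
    have h1 : ρ z ^ r ≤ t ^ r := pow_le_pow_left₀ (hρ0 z) h r
    rw [hρ z] at h1
    have : (∑ j, |inner ℝ (u (x j)) z| ^ r) / (m : ℝ) ≤ t ^ r := by linarith [hnonneg0 z]
    rw [div_le_iff₀ hm0] at this
    linarith
  have hb : ∀ z, ρ z ≤ 1 → ‖z‖ ≤ 2 := by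
    intro z hz
    have h1 := hρint z 1 hz
    rw [one_pow] at h1
    have h2 : ‖z‖ ^ 2 ≤ 2 := by
      rw [← hiso z]
      have hc2 : Continuous fun ω => |inner ℝ (u ω) z| ^ r := by fun_prop
      calc ∫ ω, (inner ℝ (u ω) z) ^ 2 ∂μ ≤ ∫ ω, (1 + |inner ℝ (u ω) z| ^ r) ∂μ := by
            apply integral_mono (cont_integrable μ (by fun_prop)) (cont_integrable μ (by fun_prop))
            intro ω
            simp only
            rw [← sq_abs]
            rcases le_total |inner ℝ (u ω) z| 1 with h | h
            · have : |inner ℝ (u ω) z| ^ 2 ≤ 1 := pow_le_one₀ (abs_nonneg _) h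
              have : 0 ≤ |inner ℝ (u ω) z| ^ r := by positivity
              linarith
            · have := pow_le_pow_right₀ h hr
              linarith
        _ = 1 + ∫ ω, |inner ℝ (u ω) z| ^ r ∂μ := by
            rw [integral_add (integrable_const _) (cont_integrable μ hc2)]; simp
        _ ≤ 2 := by linarith
    nlinarith [norm_nonneg z]
  -- scales
  set β : ℝ := 2 ^ θ with hβ
  have hβ2 : 2 ≤ β := by
    calc (2 : ℝ) = 2 ^ (1 : ℝ) := (Real.rpow_one 2).symm
      _ ≤ 2 ^ θ := Real.rpow_le_rpow_of_exponent_le (by norm_num) hθ.le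
  have hβ4 : β ≤ 4 := two_rpow_le_four hθ2
  have hβ0 : 0 < β := by linarith
  set t : ℕ → ℝ := fun k => 4 * M * (1 / 2) ^ k with ht
  have ht0 : ∀ k, 0 < t k := fun k => by simp only [ht]; positivity
  have hts : ∀ k, t (k + 1) = t k / 2 := fun k => by simp only [ht]; ring
  have htθ : ∀ k, (t k) ^ θ = (4 * M) ^ θ * (β⁻¹) ^ k := fun k => by
    simp only [ht]
    rw [Real.mul_rpow (by positivity) (by positivity)]
    congr 1
    rw [← Real.rpow_natCast, ← Real.rpow_mul (by norm_num), mul_comm, Real.rpow_mul (by norm_num),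
      Real.rpow_natCast]
    congr 1
    rw [one_div, Real.inv_rpow (by norm_num)]
  have hMθ : (4 * M) ^ θ = (4 * K) ^ θ * H ^ 2 := by
    rw [hMdef, ← mul_assoc, Real.mul_rpow (by positivity) (by positivity),
      ← Real.rpow_mul hH0.le, div_mul_cancel₀ _ (by linarith : θ ≠ 0), Real.rpow_two]
  have hKθ1 : 4 * K ≤ (4 * K) ^ θ := by
    calc 4 * K = (4 * K) ^ (1 : ℝ) := (Real.rpow_one _).symm
      _ ≤ _ := Real.rpow_le_rpow_of_exponent_le (by linarith) hθ.le
  have hKθ2 : (4 * K) ^ θ ≤ 16 * K ^ 2 := by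
    calc (4 * K) ^ θ ≤ (4 * K) ^ (2 : ℝ) := Real.rpow_le_rpow_of_exponent_le (by linarith) hθ2
      _ = _ := by rw [Real.rpow_two]; ring
  set c : ℝ := 40962 * r * K with hc
  have hrK : 1 ≤ r * K := by nlinarith
  have hc1 : 1 ≤ c := by rw [hc]; linarith
  set G := q ^ 2 * A * Φ M / M ^ θ with hG
  have hMθ0 : 0 < M ^ θ := Real.rpow_pos_of_pos hM0 _
  have hG0 : 0 < G := by positivity
  set s := Real.sqrt (4 * (8 * G * m * R * (1 + L)) * (4 * M) ^ θ) with hs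
  have hs0' : 0 < 4 * (8 * G * m * R * (1 + L)) * (4 * M) ^ θ := by positivity
  have hs0 : 0 < s := Real.sqrt_pos.mpr hs0'
  have hssq : s ^ 2 = 4 * (8 * G * m * R * (1 + L)) * (4 * M) ^ θ := Real.sq_sqrt hs0'.le
  set KN := Nat.clog 2 (Module.finrank ℝ E) with hKN
  have key := chain_final ρ F hF h0 (fun z j => Φ |inner ℝ (u (x j)) z|)
    (by ext j; simp [hpre.map_zero]) t ht0 (fun k => by rw [hts]; linarith [ht0 k]) β c s hβ2 hβ4 hc1
    hs0 KN ?_ ?_ ?_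
  · refine key.trans ?_
    have hfac : (0 : ℝ) ≤ 2 * (KN + 1) + 16 := by positivity
    rw [show s * Real.sqrt (2 * c) * (2 * (KN + 1) + 16) =
      Real.sqrt ((s * Real.sqrt (2 * c) * (2 * (KN + 1) + 16)) ^ 2) from
        (Real.sqrt_sq (by positivity)).symm]
    apply Real.sqrt_le_sqrt
    rw [mul_pow, mul_pow, hssq, Real.sq_sqrt (by positivity), Real.mul_rpow (by norm_num) hM0.le]
    have h4 : (4 : ℝ) ^ θ ≤ 16 := by
      calc (4 : ℝ) ^ θ ≤ 4 ^ (2 : ℝ) := Real.rpow_le_rpow_of_exponent_le (by norm_num) hθ2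
        _ = 16 := by rw [Real.rpow_two]; norm_num
    have e1 : G * M ^ θ = q ^ 2 * A * Φ M := by rw [hG]; field_simp
    calc 4 * (8 * G * m * R * (1 + L)) * (4 ^ θ * M ^ θ) * (2 * c) * (2 * ((KN : ℝ) + 1) + 16) ^ 2
        = 32 * 4 ^ θ * (G * M ^ θ) * m * R * (1 + L) * (2 * c) * (2 * KN + 18) ^ 2 := by ring
      _ ≤ 32 * 16 * (G * M ^ θ) * m * R * (1 + L) * (2 * c) * (2 * KN + 18) ^ 2 := by gcongr
      _ = 41945088 * (q ^ 2 * A * (1 + L) * K * r * (2 * KN + 18) ^ 2 * Φ M * (m * R)) := by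
          rw [e1, hc]; ring
      _ ≤ 50000000 * (q ^ 2 * A * (1 + L) * K * r * (2 * KN + 18) ^ 2 * Φ M * (m * R)) := by
          gcongr; norm_num
      _ = _ := by ring
  · -- start
    intro z hz
    simp only [ht, pow_zero, mul_one]
    refine le_of_pow_le_pow_left₀ (n := r) (by omega) (by positivity) ?_
    rw [hρ z]
    have h1 : ∫ ω, |inner ℝ (u ω) z| ^ r ∂μ ≤ M ^ r := by
      calc ∫ ω, |inner ℝ (u ω) z| ^ r ∂μ ≤ ∫ ω, M ^ r ∂μ := by
            apply integral_mono (cont_integrable μ (by fun_prop)) (integrable_const _)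
            intro ω
            exact pow_le_pow_left₀ (abs_nonneg _) (hsup z hz ω) r
        _ = M ^ r := by simp
    have h2 : (∑ j, |inner ℝ (u (x j)) z| ^ r) / (m : ℝ) ≤ M ^ r := by
      rw [div_le_iff₀ hm0]
      calc ∑ j, |inner ℝ (u (x j)) z| ^ r ≤ ∑ j : Fin m, M ^ r :=
            Finset.sum_le_sum fun j _ => pow_le_pow_left₀ (abs_nonneg _) (hsup z hz _) r
        _ = M ^ r * m := by simp [mul_comm]
    have h3 : (2 : ℝ) ≤ 4 ^ r := by
      calc (2 : ℝ) ≤ 4 ^ 1 := by norm_num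
        _ ≤ 4 ^ r := pow_le_pow_right₀ (by norm_num) (by omega)
    rw [mul_pow]
    have : 0 < M ^ r := by positivity
    nlinarith
  · -- entropy
    intro k g hg S hS hSk hsep
    have hτ : t (k + 1) = t k / 2 := hts k
    rcases le_total k KN with hk | hk
    · rw [min_eq_left hk]
      have hl2 : ∀ a ∈ S, ‖a - g‖ ^ 2 ≤ 80 * K ^ 2 * (t k) ^ (2 - θ) := by
        intro a ha
        rw [← hiso]
        simp_rw [inner_sub_right]
        refine l2_bound μ (H := H) (hcf a) (hcf g) hθ hθ2 hK1 (hthe a (hS ha)) (hthe g hg) hr (ht0 k) ?_ hrH ?_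
        · rw [htθ k, hMθ]
          have : (β⁻¹) ^ k ≤ 1 := pow_le_one₀ (by positivity) (inv_le_one_of_one_le₀ (by linarith))
          calc (4 * K) ^ θ * H ^ 2 * β⁻¹ ^ k ≤ (4 * K) ^ θ * H ^ 2 * 1 := by gcongr
            _ ≤ 16 * K ^ 2 * H ^ 2 * 1 := by gcongr
            _ = _ := by ring
        · have := hρint (a - g) (t k) (hSk a ha)
          simp_rw [inner_sub_right] at this
          exact this
      have h1 := gauss_entropy ρ hρc (16 * Real.sqrt r * H) (by positivity) hgs S g _ (t (k + 1))
        (ht0 _) hl2 hsep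
      refine h1.trans ?_
      have htk := ht0 k
      have e : 2 * (16 * Real.sqrt r * H) ^ 2 * (80 * K ^ 2 * (t k) ^ (2 - θ)) / (t (k + 1)) ^ 2 =
          163840 * r * H ^ 2 * K ^ 2 * ((t k) ^ θ)⁻¹ := by
        rw [hτ, mul_pow, mul_pow, Real.sq_sqrt hr0.le, Real.rpow_sub htk, Real.rpow_two]
        field_simp
        ring
      rw [e, htθ k, hMθ]
      have e2 : 163840 * r * H ^ 2 * K ^ 2 * ((4 * K) ^ θ * H ^ 2 * β⁻¹ ^ k)⁻¹ ≤ 40960 * r * K * β ^ k := by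
        have hp : 0 < (4 * K) ^ θ := by positivity
        rw [mul_inv, mul_inv, inv_pow, inv_inv]
        have : 163840 * r * H ^ 2 * K ^ 2 * (((4 * K) ^ θ)⁻¹ * (H ^ 2)⁻¹ * β ^ k) =
          163840 * r * K ^ 2 * β ^ k * ((4 * K) ^ θ)⁻¹ := by field_simp
        rw [this, ← div_eq_mul_inv, div_le_iff₀ hp]
        calc 163840 * r * K ^ 2 * β ^ k = 40960 * r * K * β ^ k * (4 * K) := by ring
          _ ≤ _ := by gcongr
      have e3 : (2 : ℝ) ≤ Real.exp 1 := by linarith [Real.add_one_le_exp 1]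
      have e4 : 1 ≤ β ^ k := one_le_pow₀ (by linarith)
      calc 2 * Real.exp _ ≤ Real.exp 1 * Real.exp (40960 * r * K * β ^ k) := by gcongr
        _ = Real.exp (1 + 40960 * r * K * β ^ k) := by rw [Real.exp_add]
        _ ≤ Real.exp (c * β ^ k) := by
          apply Real.exp_le_exp.mpr
          rw [hc]
          nlinarith
    · rw [min_eq_right hk]
      have h1 := vol_entropy ρ hρc hb S g (t (k + 1)) (ht0 _)
        (fun a ha => by rw [hτ]; linarith [hSk a ha]) hsep
      refine h1.trans ?_
      set N := Module.finrank ℝ E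
      have e1 : (5 : ℝ) ≤ Real.exp 2 := by
        have h := Real.exp_one_gt_d9
        have : Real.exp 2 = Real.exp 1 * Real.exp 1 := by rw [← Real.exp_add]; norm_num
        nlinarith
      have e2 : (N : ℝ) ≤ β ^ KN := by
        have : N ≤ 2 ^ KN := Nat.le_pow_clog (by norm_num) N
        calc (N : ℝ) ≤ 2 ^ KN := by exact_mod_cast this
          _ ≤ β ^ KN := by gcongr
      calc (5 : ℝ) ^ N ≤ (Real.exp 2) ^ N := by gcongr
        _ = Real.exp (N * 2) := by rw [Real.exp_nat_mul]
        _ ≤ Real.exp (c * β ^ KN) := by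
          apply Real.exp_le_exp.mpr
          have : 2 ≤ c := by rw [hc]; linarith
          calc (N : ℝ) * 2 ≤ β ^ KN * c := by gcongr
            _ = _ := by ring
  · -- differences
    intro k f hf g hg hfg
    rw [hssq]
    have h1 := sum_sq_bound hpre hq hdec hA1 hθ hθ2 hA hM0 (fun j => |inner ℝ (u (x j)) f|)
      (fun j => |inner ℝ (u (x j)) g|) (fun j => |inner ℝ (u (x j)) (f - g)|)
      (fun j => abs_nonneg _) (fun j => abs_nonneg _) (fun j => hsup f hf _) (fun j => hsup g hg _)
      (fun j => by rw [inner_sub_right]; exact abs_abs_sub_abs_le_abs_sub _ _) hr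
      (t := 2 * t k) (by linarith [ht0 k]) hR hL0 hL (hρsum _ _ hfg) (hFR f hf) (hFR g hg)
    refine h1.trans ?_
    rw [Real.mul_rpow (by norm_num) (ht0 k).le, htθ k]
    calc 8 * G * m * R * (1 + L) * (2 ^ θ * ((4 * M) ^ θ * β⁻¹ ^ k))
        ≤ 8 * G * m * R * (1 + L) * (4 * ((4 * M) ^ θ * β⁻¹ ^ k)) := by gcongr
      _ = _ := by ring

end FixedX

end


noncomputable section

section Core

variable {E : Type*} [NormedAddCommGroup E] [InnerProductSpace ℝ E] [FiniteDimensional ℝ E]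
  [MeasurableSpace E] [BorelSpace E]
variable {Ω : Type*} [TopologicalSpace Ω] [CompactSpace Ω] [MeasurableSpace Ω] [BorelSpace Ω]
  [SecondCountableTopology Ω] (μ : Measure Ω) [IsProbabilityMeasure μ]

lemma core_fin {Φ : ℝ → ℝ} {q θ A : ℝ} (hpre : IsPhiPrefun Φ) (hq : 1 ≤ q) (hdec : DecQ Φ q)
    (hA1 : 1 ≤ A) (hθ : 1 < θ) (hθ2 : θ ≤ 2) (hA : AIncP Φ θ A)
    (u : Ω → E) (hu : Continuous u) (H : ℝ) (hH : 1 ≤ H) (huH : ∀ ω, ‖u ω‖ ≤ H)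
    (hiso : ∀ z, ∫ ω, (inner ℝ (u ω) z) ^ 2 ∂μ = ‖z‖ ^ 2)
    {r : ℕ} (hr : 2 ≤ r) {K M L : ℝ} (hKdef : K = 1 + A / Φ 1) (hMdef : M = K * H ^ (2 / θ))
    (hrH : H ^ 2 ≤ 2 ^ r) (hL0 : 0 ≤ L) (hL : Φ M ≤ L * 2 ^ r)
    {m : ℕ} (hm : 1 ≤ m) {ε : ℝ} (hε : 0 < ε) (hε2 : ε ≤ 1 / 2)
    (hmQ : 16 * (50000000 * q ^ 2 * A * (1 + L) * K * r * (2 * Nat.clog 2 (Module.finrank ℝ E) + 18) ^ 2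
        * Φ M) / ε ^ 2 ≤ m)
    (F : Finset E) (h0 : (0 : E) ∈ F)
    (hFB : ∀ z ∈ F, ∫ ω, Φ |inner ℝ (u ω) z| ∂μ ≤ 1) :
    ∃ x : Fin m → Ω, ∀ z ∈ F,
      |∑ j, Φ |inner ℝ (u (x j)) z| - m * ∫ ω, Φ |inner ℝ (u ω) z| ∂μ| ≤ ε * m := by
  have hF : F.Nonempty := ⟨0, h0⟩
  set Q := 50000000 * q ^ 2 * A * (1 + L) * K * r * (2 * Nat.clog 2 (Module.finrank ℝ E) + 18) ^ 2
        * Φ M with hQ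
  have hm0 : (0 : ℝ) < m := by exact_mod_cast hm
  have hΦ1 : 0 < Φ 1 := phi_pos hpre hdec one_pos
  have hK0 : 0 < K := by rw [hKdef]; positivity
  have hM0 : 0 < M := by rw [hMdef]; positivity
  have hΦM : 0 < Φ M := phi_pos hpre hdec hM0
  have hQ0 : 0 ≤ Q := by positivity
  have hφc : ∀ z : E, Continuous fun ω => Φ |inner ℝ (u ω) z| := fun z =>
    (phi_cont hpre hq hdec).comp (by fun_prop : Continuous fun ω => inner ℝ (u ω) z)
  set P := Measure.pi fun _ : Fin m => μ with hP
  set Z : (Fin m → Ω) → ℝ := fun x => F.sup' hF (fun z =>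
    |∑ j, Φ |inner ℝ (u (x j)) z| - m * ∫ ω, Φ |inner ℝ (u ω) z| ∂μ|) with hZ
  have hZle : ∀ x, ∀ z ∈ F,
      |∑ j, Φ |inner ℝ (u (x j)) z| - m * ∫ ω, Φ |inner ℝ (u ω) z| ∂μ| ≤ Z x := fun x z hz =>
    Finset.le_sup' (f := fun z => |∑ j, Φ |inner ℝ (u (x j)) z| - m * ∫ ω, Φ |inner ℝ (u ω) z| ∂μ|) hz
  have hZ0 : ∀ x, 0 ≤ Z x := fun x => (abs_nonneg _).trans (hZle x 0 h0)
  have hZc : Continuous Z := by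
    refine Continuous.finset_sup'_apply hF (fun z _ => ?_)
    have : ∀ j, Continuous fun x : Fin m → Ω => Φ |inner ℝ (u (x j)) z| := fun j =>
      (hφc z).comp (continuous_apply j)
    exact ((continuous_finsetSum _ fun j _ => this j).sub continuous_const).abs
  have hZi : Integrable Z P := cont_integrable P hZc
  set δ := ε / 4 with hδ
  have hδ0 : 0 < δ := by positivity
  have hsym := symm_ineq μ F hF (fun z ω => Φ |inner ℝ (u ω) z|) hφc m
  have hbd : ∀ x : Fin m → Ω,
      2 * ravg (fun e => F.sup' hF (fun z => |rdot e (fun j => Φ |inner ℝ (u (x j)) z|)|)) ≤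
      δ * (m + Z x) + Q / δ := by
    intro x
    have h1 := fixed_x μ hpre hq hdec hA1 hθ hθ2 hA u hu H hH huH hiso hr hKdef hMdef hrH hL0 hL
      (R := 1 + Z x / m) (by have := hZ0 x; have : 0 ≤ Z x / m := by positivity
                             linarith) hm x F hF h0 hFB (fun z hz => by
        have e1 := (le_abs_self _).trans (hZle x z hz)
        have e2 := hFB z hz
        have e3 : m * (1 + Z x / m) = m + Z x := by field_simp
        rw [e3]
        nlinarith)
    have e3 : m * (1 + Z x / m) = m + Z x := by field_simp
    rw [e3, ← hQ] at h1
    have hY : 0 ≤ m + Z x := by linarith [hZ0 x]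
    set Y := m + Z x
    have h2 : 2 * Real.sqrt (Q * Y) ≤ δ * Y + Q / δ := by
      have e : Real.sqrt (Q * Y) = Real.sqrt (Q / δ) * Real.sqrt (δ * Y) := by
        rw [← Real.sqrt_mul (by positivity)]; congr 1; field_simp
      rw [e]
      have a1 := Real.sq_sqrt (show 0 ≤ Q / δ by positivity)
      have a2 := Real.sq_sqrt (show 0 ≤ δ * Y by positivity)
      nlinarith [sq_nonneg (Real.sqrt (Q / δ) - Real.sqrt (δ * Y))]
    linarith
  have hEZ : ∫ x, Z x ∂P ≤ δ * (m + ∫ x, Z x ∂P) + Q / δ := by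
    refine hsym.trans ?_
    calc _ ≤ ∫ x, (δ * (m + Z x) + Q / δ) ∂P := by
          refine integral_mono_of_nonneg (Filter.Eventually.of_forall fun x => ?_) ?_
            (Filter.Eventually.of_forall hbd)
          · simp only [Pi.zero_apply]
            have : 0 ≤ ravg (fun e => F.sup' hF (fun z => |rdot e (fun j => Φ |inner ℝ (u (x j)) z|)|)) := by
              rw [← ravg_const (m := m) 0]
              refine ravg_mono fun e => ?_
              exact (abs_nonneg _).trans
                (Finset.le_sup' (f := fun z => |rdot e (fun j => Φ |inner ℝ (u (x j)) z|)|) h0)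
            linarith
          · exact cont_integrable P (by fun_prop)
      _ = _ := by
          rw [integral_add (cont_integrable P (by fun_prop)) (integrable_const _), integral_const_mul,
            integral_add (integrable_const _) hZi]
          simp
  have hQδ : Q / δ ≤ ε / 4 * m := by
    rw [div_le_iff₀ (by positivity)] at hmQ
    rw [hδ, div_le_iff₀ (by positivity)]
    nlinarith
  have hEZ' : ∫ x, Z x ∂P ≤ ε * m := by
    have hI0 : 0 ≤ ∫ x, Z x ∂P := integral_nonneg hZ0
    have : δ ≤ 1 / 8 := by rw [hδ]; linarith
    have e1 : δ * ∫ x, Z x ∂P ≤ 1 / 8 * ∫ x, Z x ∂P := by gcongr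
    have e2 : 0 ≤ ε * m := by positivity
    have e3 : δ * m = ε / 4 * m := by rw [hδ]
    nlinarith
  obtain ⟨x, hx⟩ := exists_le_integral hZi
  exact ⟨x, fun z hz => (hZle x z hz).trans (hx.trans hEZ')⟩

lemma core_all {Φ : ℝ → ℝ} {q θ A : ℝ} (hpre : IsPhiPrefun Φ) (hq : 1 ≤ q) (hdec : DecQ Φ q)
    (hA1 : 1 ≤ A) (hθ : 1 < θ) (hθ2 : θ ≤ 2) (hA : AIncP Φ θ A)
    (u : Ω → E) (hu : Continuous u) (H : ℝ) (hH : 1 ≤ H) (huH : ∀ ω, ‖u ω‖ ≤ H)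
    (hiso : ∀ z, ∫ ω, (inner ℝ (u ω) z) ^ 2 ∂μ = ‖z‖ ^ 2)
    {r : ℕ} (hr : 2 ≤ r) {K M L : ℝ} (hKdef : K = 1 + A / Φ 1) (hMdef : M = K * H ^ (2 / θ))
    (hrH : H ^ 2 ≤ 2 ^ r) (hL0 : 0 ≤ L) (hL : Φ M ≤ L * 2 ^ r)
    {m : ℕ} (hm : 1 ≤ m) {ε : ℝ} (hε : 0 < ε) (hε2 : ε ≤ 1 / 2)
    (hmQ : 16 * (50000000 * q ^ 2 * A * (1 + L) * K * r * (2 * Nat.clog 2 (Module.finrank ℝ E) + 18) ^ 2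
        * Φ M) / ε ^ 2 ≤ m) :
    ∃ x : Fin m → Ω, ∀ z : E, ∫ ω, Φ |inner ℝ (u ω) z| ∂μ ≤ 1 →
      |∑ j, Φ |inner ℝ (u (x j)) z| - m * ∫ ω, Φ |inner ℝ (u ω) z| ∂μ| ≤ ε * m := by
  classical
  have hφc : ∀ z : E, Continuous fun ω => Φ |inner ℝ (u ω) z| := fun z =>
    (phi_cont hpre hq hdec).comp (by fun_prop : Continuous fun ω => inner ℝ (u ω) z)
  let ι := {z : E // ∫ ω, Φ |inner ℝ (u ω) z| ∂μ ≤ 1}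
  let C : ι → Set (Fin m → Ω) := fun z =>
    {x | |∑ j, Φ |inner ℝ (u (x j)) z.1| - m * ∫ ω, Φ |inner ℝ (u ω) z.1| ∂μ| ≤ ε * m}
  have hne := isCompact_univ.inter_iInter_nonempty C (fun z => by
    refine isClosed_le ?_ continuous_const
    have : ∀ j, Continuous fun x : Fin m → Ω => Φ |inner ℝ (u (x j)) z.1| := fun j =>
      (hφc z.1).comp (continuous_apply j)
    exact ((continuous_finsetSum _ fun j _ => this j).sub continuous_const).abs) (fun s => by
    obtain ⟨x, hx⟩ := core_fin μ hpre hq hdec hA1 hθ hθ2 hA u hu H hH huH hiso hr hKdef hMdef hrH hL0 hL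
      hm hε hε2 hmQ (insert 0 (s.image Subtype.val)) (by simp) (fun z hz => by
        rw [Finset.mem_insert, Finset.mem_image] at hz
        rcases hz with rfl | ⟨w, -, rfl⟩
        · simp [hpre.map_zero]
        · exact w.2)
    refine ⟨x, Set.mem_univ _, ?_⟩
    simp only [Set.mem_iInter]
    intro z hz
    exact hx z.1 (Finset.mem_insert_of_mem (Finset.mem_image_of_mem _ hz)))
  obtain ⟨x, -, hx⟩ := hne
  rw [Set.mem_iInter] at hx
  exact ⟨x, fun z hz => hx ⟨z, hz⟩⟩

end Core

end


noncomputable section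

section Reduction

lemma exists_onb {V : Type*} [AddCommGroup V] [Module ℝ V] [FiniteDimensional ℝ V]
    (B : V → V → ℝ) (hsymm : ∀ v w, B v w = B w v) (hadd : ∀ v w z, B (v + w) z = B v z + B w z)
    (hsmul : ∀ (c : ℝ) v w, B (c • v) w = c * B v w) (hnn : ∀ v, 0 ≤ B v v)
    (hdef : ∀ v, B v v = 0 → v = 0) :
    ∃ b : Fin (Module.finrank ℝ V) → V, (∀ i j, B (b i) (b j) = if i = j then 1 else 0) ∧
      ∀ v, v = ∑ i, B (b i) v • b i := by
  let core : InnerProductSpace.Core ℝ V :=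
    { inner := B
      conj_inner_symm := fun v w => by simpa using hsymm w v
      re_inner_nonneg := fun v => by simpa using hnn v
      add_left := hadd
      smul_left := fun v w c => by simpa using hsmul c v w
      definite := hdef }
  letI : NormedAddCommGroup V := core.toNormedAddCommGroup
  letI : InnerProductSpace ℝ V := InnerProductSpace.ofCore core.toCore
  let b := stdOrthonormalBasis ℝ V
  refine ⟨fun i => b i, fun i j => ?_, fun v => ?_⟩
  · exact orthonormal_iff_ite.mp b.orthonormal i j
  · exact (b.sum_repr' v).symm

lemma exists_u {Ω : Type*} [TopologicalSpace Ω] [CompactSpace Ω] [MeasurableSpace Ω] [BorelSpace Ω]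
    [SecondCountableTopology Ω] (μ : Measure Ω) [IsProbabilityMeasure μ] {N : ℕ} (hN : 1 ≤ N)
    {H : ℝ} (X : Submodule ℝ (Ω → ℝ)) (hc : ∀ f ∈ X, Continuous f)
    (hfr : Module.finrank ℝ X = N)
    (hsup : ∀ f ∈ X, supNorm f ≤ H * Real.sqrt (∫ y, (f y) ^ 2 ∂μ)) :
    ∃ u : Ω → EuclideanSpace ℝ (Fin N), Continuous u ∧ (∀ ω, ‖u ω‖ ≤ H) ∧
      (∀ z, ∫ ω, (inner ℝ (u ω) z) ^ 2 ∂μ = ‖z‖ ^ 2) ∧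
      ∀ f ∈ X, ∃ z, ∀ ω, f ω = inner ℝ (u ω) z := by
  subst hfr
  have : FiniteDimensional ℝ X := Module.finite_of_finrank_pos (by omega)
  have hpt : ∀ f ∈ X, ∀ ω, |f ω| ≤ H * Real.sqrt (∫ y, (f y) ^ 2 ∂μ) := by
    intro f hf ω
    refine le_trans ?_ (hsup f hf)
    refine le_ciSup (f := fun x => |f x|) ?_ ω
    have := (isCompact_range (hc f hf).abs).bddAbove
    exact this
  have hi : ∀ f g : X, Integrable (fun ω => f.1 ω * g.1 ω) μ := fun f g =>
    cont_integrable μ ((hc f.1 f.2).mul (hc g.1 g.2))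
  obtain ⟨b, hb, hspan⟩ := exists_onb (V := X) (fun f g => ∫ ω, f.1 ω * g.1 ω ∂μ)
    (fun v w => by simp only [mul_comm])
    (fun v w z => by
      rw [← integral_add (hi v z) (hi w z)]
      congr 1; ext ω; simp [add_mul])
    (fun c v w => by
      rw [← integral_const_mul]
      congr 1; ext ω; simp [mul_assoc])
    (fun v => integral_nonneg fun ω => mul_self_nonneg _)
    (fun v hv => by
      ext ω
      have h := hpt v.1 v.2 ω
      have e : ∫ y, (v.1 y) ^ 2 ∂μ = 0 := by simpa only [sq] using hv
      rw [e, Real.sqrt_zero, mul_zero] at h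
      simpa using abs_nonpos_iff.mp h)
  set u : Ω → EuclideanSpace ℝ (Fin (Module.finrank ℝ X)) := fun ω => WithLp.toLp 2 (fun i => (b i).1 ω) with hu
  have hin : ∀ ω z, inner ℝ (u ω) z = ∑ i, z i * (b i).1 ω := fun ω z => by
    simp [hu, PiLp.inner_apply]
  have huc : Continuous u := by
    have : Continuous fun ω => (fun i => (b i).1 ω : Fin (Module.finrank ℝ X) → ℝ) :=
      continuous_pi fun i => hc _ (b i).2
    exact (PiLp.continuous_toLp 2 _).comp this
  have hiso : ∀ z, ∫ ω, (inner ℝ (u ω) z) ^ 2 ∂μ = ‖z‖ ^ 2 := by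
    intro z
    simp_rw [hin]
    have e : ∀ ω, (∑ i, z i * (b i).1 ω) ^ 2 = ∑ i, ∑ j, (z i * z j) * ((b i).1 ω * (b j).1 ω) := by
      intro ω
      rw [sq, Finset.sum_mul_sum]
      refine Finset.sum_congr rfl fun i _ => Finset.sum_congr rfl fun j _ => by ring
    simp_rw [e]
    rw [integral_finsetSum _ (fun i _ => integrable_finsetSum _ fun j _ => (hi (b i) (b j)).const_mul _)]
    have e2 : ∀ i, ∫ ω, ∑ j, (z i * z j) * ((b i).1 ω * (b j).1 ω) ∂μ = z i ^ 2 := by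
      intro i
      rw [integral_finsetSum _ (fun j _ => (hi (b i) (b j)).const_mul _)]
      simp_rw [integral_const_mul, hb]
      simp [sq]
    simp_rw [e2]
    rw [EuclideanSpace.norm_sq_eq]
    simp
  have hmem : ∀ z : EuclideanSpace ℝ (Fin (Module.finrank ℝ X)), (fun ω => inner ℝ (u ω) z) ∈ X := by
    intro z
    have : (fun ω => inner ℝ (u ω) z) = ((∑ i, z i • b i : X) : Ω → ℝ) := by
      ext ω
      rw [hin]
      simp
    rw [this]
    exact (∑ i, z i • b i : X).2
  refine ⟨u, huc, fun ω => ?_, hiso, fun f hf => ?_⟩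
  · have h : |inner ℝ (u ω) (u ω)| ≤ H * √(∫ y, (inner ℝ (u y) (u ω)) ^ 2 ∂μ) := hpt _ (hmem (u ω)) ω
    rw [hiso, Real.sqrt_sq (norm_nonneg _), real_inner_self_eq_norm_sq, abs_of_nonneg (by positivity)] at h
    rcases (norm_nonneg (u ω)).eq_or_lt with h0 | h0
    · rw [← h0]
      by_contra hH
      push Not at hH
      -- use any nonzero basis vector
      have i : Fin (Module.finrank ℝ X) := ⟨0, by omega⟩
      have h1 := hb i i
      rw [if_pos rfl] at h1
      have h2 := hpt _ (b i).2 ω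
      have e : ∫ y, ((b i).1 y) ^ 2 ∂μ = 1 := by simpa only [sq] using h1
      rw [e, Real.sqrt_one, mul_one] at h2
      linarith [abs_nonneg ((b i).1 ω)]
    · nlinarith
  · refine ⟨WithLp.toLp 2 (fun i => ∫ y, (b i).1 y * f y ∂μ), fun ω => ?_⟩
    rw [hin]
    have h := congrArg (fun g : X => g.1 ω) (hspan ⟨f, hf⟩)
    simpa using h

end Reduction

end


noncomputable section

section LuxStep

lemma le_of_eta {q a b : ℝ} (h : ∀ η : ℝ, 1 < η → a ≤ η ^ q * b) : a ≤ b := by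
  have hc : Filter.Tendsto (fun η : ℝ => η ^ q * b) (nhdsWithin 1 (Set.Ioi 1)) (nhds b) := by
    have h1 : ContinuousAt (fun η : ℝ => η ^ q * b) 1 :=
      (Real.continuousAt_rpow_const 1 q (Or.inl one_ne_zero)).mul continuousAt_const
    have h2 := h1.tendsto
    simp only [Real.one_rpow, one_mul] at h2
    exact h2.mono_left nhdsWithin_le_nhds
  refine ge_of_tendsto hc ?_
  filter_upwards [self_mem_nhdsWithin] with η hη using h η hη

variable {Ω : Type*} [TopologicalSpace Ω] [CompactSpace Ω] [MeasurableSpace Ω] [BorelSpace Ω]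
  [SecondCountableTopology Ω] (μ : Measure Ω) [IsProbabilityMeasure μ]

lemma lux_step {Φ : ℝ → ℝ} {q a1 : ℝ} (hpre : IsPhiPrefun Φ) (hq : 1 ≤ q) (hdec : DecQ Φ q)
    (ha1 : 1 ≤ a1) (hA1 : AIncP Φ 1 a1) {m : ℕ} (hm : 1 ≤ m) (x : Fin m → Ω) {ε M : ℝ}
    (hε : 0 < ε) (hε2 : ε ≤ 1 / 2) (hM : 0 < M) {f : Ω → ℝ} (hf : Continuous f)
    (hsup : ∀ l : ℝ, 0 < l → ∫ ω, Φ (|f ω| / l) ∂μ ≤ 1 → ∀ ω, |f ω| ≤ l * M)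
    (hx : ∀ l : ℝ, 0 < l → ∫ ω, Φ (|f ω| / l) ∂μ ≤ 1 →
      |∑ j, Φ (|f (x j)| / l) - m * ∫ ω, Φ (|f ω| / l) ∂μ| ≤ ε * m) :
    a1⁻¹ * (1 - ε) * luxNorm μ Φ f ≤ discLuxNorm Φ x f ∧
      discLuxNorm Φ x f ≤ a1 * (1 + ε) * luxNorm μ Φ f := by
  have hm0 : (0 : ℝ) < m := by exact_mod_cast hm
  by_cases h0 : ∀ ω, f ω = 0
  · have e1 : luxNorm μ Φ f = 0 := by
      have : {l : ℝ | 0 < l ∧ ∫ ω, Φ (|f ω| / l) ∂μ ≤ 1} = Set.Ioi 0 := by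
        ext l; simp [h0, hpre.map_zero]
      rw [luxNorm, this, csInf_Ioi]
    have e2 : discLuxNorm Φ x f = 0 := by
      have : {l : ℝ | 0 < l ∧ (∑ j, Φ (|f (x j)| / l)) / (m : ℝ) ≤ 1} = Set.Ioi 0 := by
        ext l; simp [h0, hpre.map_zero]
      rw [discLuxNorm, this, csInf_Ioi]
    rw [e1, e2]; simp
  push Not at h0
  obtain ⟨ω1, hω1⟩ := h0
  have hf1 : 0 < |f ω1| := abs_pos.mpr hω1
  have hintgb : ∀ l : ℝ, 0 < l → Integrable (fun ω => Φ (|f ω| / l)) μ := by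
    intro l hl
    have : (fun ω => Φ (|f ω| / l)) = fun ω => Φ |f ω / l| := by
      ext ω; rw [abs_div, abs_of_pos hl]
    rw [this]
    exact cont_integrable μ ((phi_cont hpre hq hdec).comp (hf.div_const l))
  set S : Set ℝ := {l : ℝ | 0 < l ∧ ∫ ω, Φ (|f ω| / l) ∂μ ≤ 1} with hS
  have hSne : S.Nonempty := by
    obtain ⟨t, ht1, ht0⟩ := ((hpre.tendsto_zero.eventually_le_const (zero_lt_one)).and
      self_mem_nhdsWithin).exists
    have ht0 : 0 < t := ht0
    obtain ⟨ω0, -, hmax⟩ := isCompact_univ.exists_isMaxOn ⟨ω1, Set.mem_univ ω1⟩ hf.abs.continuousOn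
    have hmax : ∀ y, |f y| ≤ |f ω0| := fun y => hmax (Set.mem_univ y)
    have hB : 0 < |f ω0| := hf1.trans_le (hmax _)
    refine ⟨|f ω0| / t, div_pos hB ht0, ?_⟩
    calc ∫ ω, Φ (|f ω| / (|f ω0| / t)) ∂μ ≤ ∫ ω, (1 : ℝ) ∂μ := by
          refine integral_mono (hintgb _ (div_pos hB ht0)) (integrable_const _) fun ω => ?_
          refine le_trans (hpre.mono ?_ ht0.le ?_) ht1
          · exact (by positivity : 0 ≤ |f ω| / (|f ω0| / t))
          · rw [div_div_eq_mul_div, div_le_iff₀ hB]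
            nlinarith [hmax ω]
      _ = 1 := by simp
  have hSlb : ∀ l ∈ S, |f ω1| / M ≤ l := fun l hl => by
    rw [div_le_iff₀ hM]; exact hsup l hl.1 hl.2 ω1
  have hSbdd : BddBelow S := ⟨_, hSlb⟩
  have hlux : luxNorm μ Φ f = sInf S := rfl
  set l0 := sInf S with hl0
  have hl0p : 0 < l0 := (div_pos hf1 hM).trans_le (le_csInf hSne hSlb)
  have hIle : ∫ ω, Φ (|f ω| / l0) ∂μ ≤ 1 := by
    refine le_of_eta (q := q) fun η hη => ?_
    obtain ⟨l, hl, hlt⟩ := exists_lt_of_csInf_lt hSne (show sInf S < η * l0 by nlinarith)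
    have hlp := hl.1
    have hηq : 0 < η ^ q := Real.rpow_pos_of_pos (by linarith) q
    calc ∫ ω, Φ (|f ω| / l0) ∂μ ≤ ∫ ω, η ^ q * Φ (|f ω| / l) ∂μ := by
          refine integral_mono (hintgb _ hl0p) ((hintgb _ hlp).const_mul _) fun ω => ?_
          refine le_trans (hpre.mono ?_ ?_ ?_) (phi_dec hpre hdec (by positivity) hη.le)
          · exact (by positivity : 0 ≤ |f ω| / l0)
          · exact (by positivity : 0 ≤ η * (|f ω| / l))
          · rw [← mul_div_assoc, div_le_div_iff₀ hl0p hlp]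
            nlinarith [abs_nonneg (f ω)]
      _ = η ^ q * ∫ ω, Φ (|f ω| / l) ∂μ := integral_const_mul _ _
      _ ≤ η ^ q * 1 := by gcongr; exact hl.2
  have hIge : 1 ≤ ∫ ω, Φ (|f ω| / l0) ∂μ := by
    refine le_of_eta (q := q) fun η hη => ?_
    have hη0 : 0 < η := by linarith
    have hlp : 0 < l0 / η := div_pos hl0p hη0
    have hnot : l0 / η ∉ S := fun h => by
      have := csInf_le hSbdd h
      have h2 : l0 / η < l0 := div_lt_self hl0p hη
      linarith
    have h1 : 1 < ∫ ω, Φ (|f ω| / (l0 / η)) ∂μ := by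
      by_contra hcon
      exact hnot ⟨hlp, not_lt.mp hcon⟩
    refine h1.le.trans ?_
    rw [← integral_const_mul]
    refine integral_mono (hintgb _ hlp) ((hintgb _ hl0p).const_mul _) fun ω => ?_
    have e : |f ω| / (l0 / η) = η * (|f ω| / l0) := by field_simp
    simp only [e]
    exact phi_dec hpre hdec (by positivity) hη.le
  have hI : ∫ ω, Φ (|f ω| / l0) ∂μ = 1 := le_antisymm hIle hIge
  have hxx := hx l0 hl0p hIle
  rw [hI, mul_one, abs_le] at hxx
  obtain ⟨hx1, hx2⟩ := hxx
  -- scaling comparison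
  have hscale : ∀ s t : ℝ, 0 < t → t ≤ s → ∑ j, Φ (|f (x j)| / s) ≤
      a1 * (t / s) * ∑ j, Φ (|f (x j)| / t) := by
    intro s t ht hts
    have hs : 0 < s := ht.trans_le hts
    rw [Finset.mul_sum]
    refine Finset.sum_le_sum fun j _ => ?_
    rcases (abs_nonneg (f (x j))).eq_or_lt with h | h
    · rw [← h]; simp [hpre.map_zero]
    have := phi_inc hpre ha1 one_pos hA1 (s := |f (x j)| / s) (t := |f (x j)| / t) (by positivity)
      (by gcongr) (by positivity)
    have e : |f (x j)| / s / (|f (x j)| / t) = t / s := by field_simp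
    rwa [e, Real.rpow_one] at this
  set T : Set ℝ := {l : ℝ | 0 < l ∧ (∑ j, Φ (|f (x j)| / l)) / (m : ℝ) ≤ 1} with hT
  have hdisc : discLuxNorm Φ x f = sInf T := rfl
  have hTbdd : BddBelow T := ⟨0, fun l hl => hl.1.le⟩
  have hmemT : a1 * (1 + ε) * l0 ∈ T := by
    have hp : 0 < a1 * (1 + ε) * l0 := by positivity
    refine ⟨hp, ?_⟩
    rw [div_le_one hm0]
    have h1 : (1 : ℝ) ≤ a1 * (1 + ε) := by nlinarith
    have h2 := hscale (a1 * (1 + ε) * l0) l0 hl0p (by nlinarith)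
    have e : a1 * (l0 / (a1 * (1 + ε) * l0)) = 1 / (1 + ε) := by field_simp
    rw [e] at h2
    refine h2.trans ?_
    rw [div_mul_eq_mul_div, div_le_iff₀ (by positivity)]
    linarith
  rw [hlux, hdisc]
  refine ⟨le_csInf ⟨_, hmemT⟩ fun l hl => ?_, csInf_le hTbdd hmemT⟩
  by_contra hcon
  push Not at hcon
  have hlp := hl.1
  have hl2 := hl.2
  rw [div_le_one hm0] at hl2
  have hle : a1 * l < (1 - ε) * l0 := by
    have : a1 * l < a1 * (a1⁻¹ * (1 - ε) * l0) := by gcongr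
    have e : a1 * (a1⁻¹ * (1 - ε) * l0) = (1 - ε) * l0 := by field_simp
    linarith
  have hll : l ≤ l0 := by nlinarith
  have h2 := hscale l0 l hlp hll
  have h3 : a1 * (l / l0) * ∑ j, Φ (|f (x j)| / l) ≤ a1 * (l / l0) * m := by gcongr
  have h4 : a1 * (l / l0) < 1 - ε := by
    rw [← mul_div_assoc, div_lt_iff₀ hl0p]; exact hle
  nlinarith

end LuxStep

end


noncomputable section

section FinalSteps

lemma aInc_min {Φ : ℝ → ℝ} {p a : ℝ} (hpre : IsPhiPrefun Φ) (ha : 1 ≤ a) (hA : AIncP Φ p a) :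
    AIncP Φ (min p 2) a := by
  rcases le_total p 2 with h | h
  · rwa [min_eq_left h]
  · rw [min_eq_right h]
    intro s t hs hst
    have ht : 0 < t := hs.trans hst
    have h1 := hA s t hs hst
    have e : ∀ y : ℝ, 0 < y → Φ y / y ^ (2 : ℝ) = Φ y / y ^ p * y ^ (p - 2) := by
      intro y hy
      rw [Real.rpow_sub hy]
      have : 0 < y ^ p := Real.rpow_pos_of_pos hy p
      have : 0 < y ^ (2 : ℝ) := Real.rpow_pos_of_pos hy 2
      field_simp
    rw [e s hs, e t ht, ← mul_assoc]
    have h2 : s ^ (p - 2) ≤ t ^ (p - 2) := Real.rpow_le_rpow hs.le hst.le (by linarith)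
    have h3 : 0 ≤ Φ t / t ^ p := div_nonneg (hpre.nonneg t ht.le) (Real.rpow_nonneg ht.le _)
    exact mul_le_mul h1 h2 (Real.rpow_nonneg hs.le _) (by positivity)

variable {Ω : Type*} [TopologicalSpace Ω] [CompactSpace Ω] [MeasurableSpace Ω] [BorelSpace Ω]
  [SecondCountableTopology Ω] (μ : Measure Ω) [IsProbabilityMeasure μ]

lemma final_gen {Φ : ℝ → ℝ} {q θ A a1 : ℝ} (hpre : IsPhiPrefun Φ) (hq : 1 ≤ q) (hdec : DecQ Φ q)
    (ha1 : 1 ≤ a1) (hA1 : AIncP Φ 1 a1)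
    (hA1' : 1 ≤ A) (hθ : 1 < θ) (hθ2 : θ ≤ 2) (hA : AIncP Φ θ A)
    {K L : ℝ} (hK : K = 1 + A / Φ 1) (hL : L = Φ 1 * K ^ q)
    {N : ℕ} (hN : 1 ≤ N) {H : ℝ} (hH : 1 ≤ H) (X : Submodule ℝ (Ω → ℝ))
    (hc : ∀ f ∈ X, Continuous f) (hfr : Module.finrank ℝ X = N)
    (hsup : ∀ f ∈ X, supNorm f ≤ H * Real.sqrt (∫ y, (f y) ^ 2 ∂μ))
    {ε : ℝ} (hε : 0 < ε) (hε2 : ε ≤ 1 / 2) {m : ℕ}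
    (hm : 16 * (50000000 * q ^ 2 * A * (1 + L) * K * (q + 3) * 400 * K ^ q) * ε⁻¹ ^ 2 *
      (Real.logb 2 ε⁻¹) ^ (θ / 2) * Φ (H ^ (2 / θ)) *
            (Real.logb 2 (2 * N)) ^ 2 * Real.logb 2 (2 * H ^ 2) ≤ (m : ℝ)) :
    ∃ x : Fin m → Ω, ∀ f ∈ X,
          a1⁻¹ * (1 - ε) * luxNorm μ Φ f ≤ discLuxNorm Φ x f ∧
          discLuxNorm Φ x f ≤ a1 * (1 + ε) * luxNorm μ Φ f := by
  have hΦ1 : 0 < Φ 1 := phi_pos hpre hdec one_pos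
  have hK1 : 1 ≤ K := by
    rw [hK]
    have : 0 ≤ A / Φ 1 := by positivity
    linarith
  have hKq : 0 < K ^ q := Real.rpow_pos_of_pos (by linarith) q
  have hL0 : 0 ≤ L := by rw [hL]; positivity
  have hN1 : (1 : ℝ) ≤ N := by exact_mod_cast hN
  have hT : 0 < H ^ (2 / θ) := Real.rpow_pos_of_pos (by linarith) _
  have hT1 : 1 ≤ H ^ (2 / θ) := Real.one_le_rpow hH (by positivity)
  set lN := Real.logb 2 (2 * N) with hlN
  set lH := Real.logb 2 (2 * H ^ 2) with hlH
  have hlH1 : 1 ≤ lH := by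
    rw [hlH, Real.le_logb_iff_rpow_le (by norm_num) (by positivity), Real.rpow_one]
    nlinarith
  have hlNe : lN = 1 + Real.logb 2 N := by
    rw [hlN, Real.logb_mul (by norm_num) (by positivity), Real.logb_self_eq_one (by norm_num)]
  have hlogN : 0 ≤ Real.logb 2 N := Real.logb_nonneg (by norm_num) hN1
  have hlN1 : 1 ≤ lN := by linarith
  have hle1 : 1 ≤ (Real.logb 2 ε⁻¹) ^ (θ / 2) := by
    refine Real.one_le_rpow ?_ (by linarith)
    rw [Real.le_logb_iff_rpow_le (by norm_num) (by positivity), Real.rpow_one,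
      le_inv_comm₀ (by norm_num) hε]
    linarith
  set P := Φ (H ^ (2 / θ)) with hP
  have hPpos : 0 < P := phi_pos hpre hdec hT
  set r : ℕ := ⌈q * lH⌉₊ + 2 with hr
  have hqlH : 0 ≤ q * lH := by positivity
  have hr1 : (r : ℝ) ≤ (q + 3) * lH := by
    have := Nat.ceil_lt_add_one hqlH
    rw [hr]; push_cast
    nlinarith
  have hr2 : (H ^ 2) ^ q ≤ (2 : ℝ) ^ r := by
    calc (H ^ 2) ^ q ≤ (2 * H ^ 2) ^ q := by
          refine Real.rpow_le_rpow (by positivity) ?_ (by linarith)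
          nlinarith
      _ = (2 : ℝ) ^ (lH * q) := by
          rw [Real.rpow_mul (by norm_num), hlH, Real.rpow_logb (by norm_num) (by norm_num) (by positivity)]
      _ ≤ (2 : ℝ) ^ (r : ℝ) := by
          refine Real.rpow_le_rpow_of_exponent_le (by norm_num) ?_
          have := Nat.le_ceil (q * lH)
          rw [hr]; push_cast; linarith
      _ = _ := Real.rpow_natCast _ _
  have hrH : H ^ 2 ≤ 2 ^ r := by
    refine le_trans ?_ hr2
    have h1 : (1 : ℝ) ≤ H ^ 2 := by nlinarith
    calc H ^ 2 = (H ^ 2) ^ (1 : ℝ) := (Real.rpow_one _).symm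
      _ ≤ _ := Real.rpow_le_rpow_of_exponent_le h1 hq
  set M := K * H ^ (2 / θ) with hM
  have hMpos : 0 < M := by positivity
  have hΦM : Φ M ≤ K ^ q * P := phi_dec hpre hdec hT.le hK1
  have hPle : P ≤ 2 ^ r * Φ 1 := by
    have h1 := phi_dec hpre hdec zero_le_one hT1
    rw [mul_one] at h1
    refine h1.trans ?_
    gcongr
    refine le_trans ?_ hr2
    refine Real.rpow_le_rpow hT.le ?_ (by linarith)
    rw [← Real.rpow_natCast]
    refine Real.rpow_le_rpow_of_exponent_le hH ?_
    rw [div_le_iff₀ (by linarith)]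
    push_cast
    linarith
  have hLM : Φ M ≤ L * 2 ^ r := by
    calc Φ M ≤ K ^ q * P := hΦM
      _ ≤ K ^ q * (2 ^ r * Φ 1) := by gcongr
      _ = _ := by rw [hL]; ring
  have hm0 : (0 : ℝ) < m := by
    refine lt_of_lt_of_le ?_ hm
    have : 0 < (Real.logb 2 ε⁻¹) ^ (θ / 2) := by linarith
    positivity
  have hm1 : 1 ≤ m := by exact_mod_cast hm0
  have hclog : (2 * Nat.clog 2 N + 18 : ℝ) ≤ 20 * lN := by
    have h1 := Real.natCeil_logb_natCast 2 N
    have h2 := Nat.ceil_lt_add_one hlogN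
    have h3 : (Nat.clog 2 N : ℝ) = (⌈Real.logb 2 N⌉₊ : ℝ) := by rw [← h1]; norm_num
    rw [h3]
    linarith
  obtain ⟨u, hu, huH, hiso, hrep⟩ := exists_u μ hN X hc hfr hsup
  have hmQ : 16 * (50000000 * q ^ 2 * A * (1 + L) * K * r *
      (2 * Nat.clog 2 (Module.finrank ℝ (EuclideanSpace ℝ (Fin N))) + 18) ^ 2 * Φ M) / ε ^ 2 ≤ m := by
    rw [finrank_euclideanSpace_fin]
    refine le_trans ?_ hm
    have hΦM0 : 0 ≤ Φ M := hpre.nonneg M hMpos.le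
    calc 16 * (50000000 * q ^ 2 * A * (1 + L) * K * r * (2 * Nat.clog 2 N + 18) ^ 2 * Φ M) / ε ^ 2
        ≤ 16 * (50000000 * q ^ 2 * A * (1 + L) * K * ((q + 3) * lH) * (20 * lN) ^ 2 * (K ^ q * P)) / ε ^ 2 := by
          gcongr
      _ = 16 * (50000000 * q ^ 2 * A * (1 + L) * K * (q + 3) * 400 * K ^ q) * ε⁻¹ ^ 2 *
            1 * P * lN ^ 2 * lH := by
          rw [inv_pow]; field_simp; ring
      _ ≤ _ := by gcongr
  obtain ⟨x, hx⟩ := core_all μ hpre hq hdec hA1' hθ hθ2 hA u hu H hH huH hiso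
    (show 2 ≤ r by omega) hK hM hrH hL0 hLM hm1 hε hε2 hmQ
  refine ⟨x, fun f hf => ?_⟩
  obtain ⟨z, hz⟩ := hrep f hf
  have hfl : ∀ l : ℝ, 0 < l → ∀ ω, |f ω| / l = |inner ℝ (u ω) (l⁻¹ • z)| := by
    intro l hl ω
    rw [real_inner_smul_right, ← hz ω, abs_mul, abs_inv, abs_of_pos hl]
    field_simp
  refine lux_step μ hpre hq hdec ha1 hA1 hm1 x hε hε2 hMpos (hc f hf) ?_ ?_
  · intro l hl hI ω
    simp_rw [hfl l hl] at hI
    have hcw : Continuous fun ω => inner ℝ (u ω) (l⁻¹ • z) := by fun_prop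
    have h := phi_sup μ hpre hq hdec hA1' hθ hθ2 hA hH hcw (fun y => ?_) hI ω
    · rw [← hfl l hl ω, div_le_iff₀ hl] at h
      rw [hM, hK]
      linarith
    · rw [hiso, Real.sqrt_sq (norm_nonneg _)]
      refine (abs_real_inner_le_norm _ _).trans ?_
      gcongr
      exact huH y
  · intro l hl hI
    simp_rw [hfl l hl] at hI ⊢
    exact hx _ hI

end FinalSteps

end

/-- Theorem 3.1 / cor4.1. Let `p ∈ (1,∞)` and let `Φ` be a Φ-function with
`Φ ∈ (aInc)_p` (constant `a_Φ(p)`) and `Φ ∈ (Dec)_q`, `q ∈ [1,∞)`. There is `C = C_{Φ,p} > 0`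
such that for every compact `Ω ⊂ ℝ^d` with Borel probability measure `μ`, every `N ≥ 1`,
`H ≥ 1`, every `N`-dimensional `X_N ∈ NI_{2,∞}(H)`, every `ε ∈ (0,1/2]` and every
`m ≥ C ε^{-2} (log₂ ε⁻¹)^{min{p,2}/2} Φ(H^{2/min{p,2}}) (log₂ 2N)² log₂ 2H²`, there are
points `x₁,…,x_m ∈ Ω` with
`a_Φ(1)⁻¹ (1−ε) ‖f‖_Φ ≤ ‖f‖_{Φ,x} ≤ a_Φ(1) (1+ε) ‖f‖_Φ` for all `f ∈ X_N`. -/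
theorem statement1 (p : ℝ) (hp : 1 < p)
    (Φ : ℝ → ℝ) (hpre : IsPhiPrefun Φ)
    (a1 : ℝ) (ha1 : 1 ≤ a1) (hA1 : AIncP Φ 1 a1)
    (aP : ℝ) (haP : 1 ≤ aP) (hAp : AIncP Φ p aP)
    (q : ℝ) (hq : 1 ≤ q) (hdec : DecQ Φ q) :
    ∃ C : ℝ, 0 < C ∧
      ∀ (d : ℕ) (Ω : Set (Fin d → ℝ)), IsCompact Ω →
      ∀ (μ : Measure Ω), IsProbabilityMeasure μ →
      ∀ N : ℕ, 1 ≤ N → ∀ H : ℝ, 1 ≤ H →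
      ∀ X : Submodule ℝ (Ω → ℝ),
        (∀ f ∈ X, Continuous f) →
        Module.finrank ℝ X = N →
        (∀ f ∈ X, supNorm f ≤ H * Real.sqrt (∫ y, (f y) ^ 2 ∂μ)) →
      ∀ ε : ℝ, 0 < ε → ε ≤ 1 / 2 →
      ∀ m : ℕ,
        C * ε⁻¹ ^ 2 * (Real.logb 2 ε⁻¹) ^ (min p 2 / 2) * Φ (H ^ (2 / min p 2)) *
            (Real.logb 2 (2 * N)) ^ 2 * Real.logb 2 (2 * H ^ 2) ≤ (m : ℝ) →
        ∃ x : Fin m → Ω, ∀ f ∈ X,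
          a1⁻¹ * (1 - ε) * luxNorm μ Φ f ≤ discLuxNorm Φ x f ∧
          discLuxNorm Φ x f ≤ a1 * (1 + ε) * luxNorm μ Φ f := by
  have hΦ1 : 0 < Φ 1 := phi_pos hpre hdec one_pos
  have hK0 : 0 < 1 + aP / Φ 1 := by positivity
  have hKq : 0 < (1 + aP / Φ 1) ^ q := Real.rpow_pos_of_pos hK0 q
  refine ⟨16 * (50000000 * q ^ 2 * aP * (1 + Φ 1 * (1 + aP / Φ 1) ^ q) * (1 + aP / Φ 1) * (q + 3) * 400 *
    (1 + aP / Φ 1) ^ q), by positivity, ?_⟩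
  intro d Ω hΩ μ hμ N hN H hH X hc hfr hsup ε hε hε2 m hm
  haveI : CompactSpace Ω := isCompact_iff_compactSpace.mp hΩ
  exact final_gen μ hpre hq hdec ha1 hA1 haP (lt_min hp (by norm_num)) (min_le_right _ _)
    (aInc_min hpre haP hAp) rfl rfl hN hH X hc hfr hsup hε hε2 hm
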